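/- arXiv:1909.10898 — 9 statements merged into one kernel-verified Lean document; each statement's English description precedes it below -/
import Mathlib

section
/- Let X be a finite subset of D^k and let X̄ = {(x_1,…,x_k) ∈ X : x_i ≠ x_j for all 1 ≤ i ≠ j ≤ k}. Then |X̄| = Σ_{τ ∈ S_k} sign(τ)·|X_τ|, where sign(τ) = (−1)^{k−c(τ)} is the signature of τ and c(τ) is the number of disjoint cycles of τ (fixed points counted as cycles of length 1). -/
/-- Number of disjoint cycles of a permutation of `Fin k`,
with fixed points counted as cycles of length 1. -/
def cycleCount {k : ℕ} (τ : Equiv.Perm (Fin k)) : ℕ :=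
  τ.cycleType.card + (k - τ.support.card)

theorem neg_one_pow_sub_cycleCount {k : ℕ} (τ : Equiv.Perm (Fin k)) :
    (-1 : ℤ) ^ (k - cycleCount τ) = (Equiv.Perm.sign τ : ℤ) := by
  have hle : τ.cycleType.card ≤ τ.support.card := by
    have h := Multiset.card_nsmul_le_sum (s := τ.cycleType) (a := 1)
      fun n hn => Equiv.Perm.one_lt_of_mem_cycleType hn |>.le
    rw [Equiv.Perm.sum_cycleType] at h
    simpa using h
  have hsupp : τ.support.card ≤ k := by
    simpa using Finset.card_le_univ τ.support
  have hexp : τ.support.card + τ.cycleType.card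
      = (k - cycleCount τ) + 2 * τ.cycleType.card := by
    unfold cycleCount
    omega
  rw [Equiv.Perm.sign_of_cycleType, Equiv.Perm.sum_cycleType, hexp, pow_add, pow_mul]
  simp

/-- The signed count of the permutations fixing a tuple `x` is `1` if `x` is injective,
and `0` otherwise. -/
theorem sum_sign_comp_eq_self {ι D : Type*} [Fintype ι] [DecidableEq ι] [DecidableEq D]
    (x : ι → D) [Decidable (Function.Injective x)] :
    ∑ τ : Equiv.Perm ι, (if x ∘ τ = x then (Equiv.Perm.sign τ : ℤ) else 0) =
      if Function.Injective x then 1 else 0 := by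
  split_ifs with hx
  · have h (τ : Equiv.Perm ι) : x ∘ τ = x ↔ τ = 1 := by
      refine ⟨fun hτ => Equiv.ext fun i => hx (congrFun hτ i), ?_⟩
      rintro rfl
      rfl
    simp [h]
  · obtain ⟨i, j, hij, hne⟩ := Function.not_injective_iff.mp hx
    have hswap : x ∘ Equiv.swap i j = x := by
      rw [Equiv.comp_swap_eq_update, hij, Function.update_eq_self, ← hij,
        Function.update_eq_self]
    have hneg := Equiv.sum_comp (Equiv.mulLeft (Equiv.swap i j))
      fun τ : Equiv.Perm ι => if x ∘ τ = x then (Equiv.Perm.sign τ : ℤ) else 0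
    simp only [Equiv.coe_mulLeft, Equiv.Perm.coe_mul, ← Function.comp_assoc, hswap,
      Equiv.Perm.sign_mul, Equiv.Perm.sign_swap hne, neg_mul, one_mul, Units.val_neg] at hneg
    have hsum : ∑ τ : Equiv.Perm ι, (if x ∘ τ = x then -(Equiv.Perm.sign τ : ℤ) else 0) =
        -∑ τ : Equiv.Perm ι, (if x ∘ τ = x then (Equiv.Perm.sign τ : ℤ) else 0) := by
      rw [← Finset.sum_neg_distrib]
      exact Finset.sum_congr rfl fun τ _ => by split_ifs <;> simp
    linarith

/-- **Li–Wan sieve.**  For a finite set `X ⊆ D^k`, the number of tuples in `X` with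
pairwise distinct coordinates equals `Σ_{τ ∈ S_k} sign(τ)·|X_τ|`, where
`sign(τ) = (-1)^{k - c(τ)}` and `X_τ` is the set of tuples in `X` fixed by `τ`. -/
theorem li_wan_sieve {D : Type*} [DecidableEq D] (k : ℕ) (hk : 0 < k)
    (X : Finset (Fin k → D)) :
    ((X.filter fun x => Function.Injective x).card : ℤ) =
      ∑ τ : Equiv.Perm (Fin k),
        (-1 : ℤ) ^ (k - cycleCount τ) * ((X.filter fun x => x ∘ τ = x).card : ℤ) := by
  simp_rw [neg_one_pow_sub_cycleCount, Finset.natCast_card_filter, Finset.mul_sum, mul_ite,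
    mul_one, mul_zero]
  rw [Finset.sum_comm]
  exact Finset.sum_congr rfl fun x _ => (sum_sign_comp_eq_self x).symm
end

section
/- Let X be a finite symmetric subset of D^k and let j be a positive integer. Then k!·|M_j(X)| = Σ_{τ ∈ S_k} w_j(τ)·|X_τ|. -/
/-- The multiset `[x_1, …, x_k]` associated to a tuple `(x_1, …, x_k)`. -/
def msetOf {D : Type*} {k : ℕ} (x : Fin k → D) : Multiset D :=
  (List.ofFn x : Multiset D)

/-- The cycle lengths of a permutation of `Fin k`, with fixed points counted
as cycles of length 1. -/
def fullCycleType {k : ℕ} (τ : Equiv.Perm (Fin k)) : Multiset ℕ :=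
  τ.cycleType + Multiset.replicate (k - τ.support.card) 1

/-- The weight `w_j(τ) = ∏_i (1 - (j+1)·[(j+1) ∣ ℓ_i])` over the cycle lengths
`ℓ_i` of `τ`. -/
def wj {k : ℕ} (j : ℕ) (τ : Equiv.Perm (Fin k)) : ℤ :=
  ((fullCycleType τ).map fun ℓ =>
    1 - ((j : ℤ) + 1) * (if (j + 1) ∣ ℓ then 1 else 0)).prod

/-- `M(X)`: the set of `k`-multisets `[x_1,…,x_k]` for `(x_1,…,x_k) ∈ X`. -/
def MX {D : Type*} [DecidableEq D] {k : ℕ} (X : Finset (Fin k → D)) : Finset (Multiset D) :=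
  X.image msetOf

/-- `M_j(X)`: multisets in `M(X)` in which every element has multiplicity at most `j`. -/
def Mj {D : Type*} [DecidableEq D] {k : ℕ} (j : ℕ) (X : Finset (Fin k → D)) :
    Finset (Multiset D) :=
  (MX X).filter fun m => ∀ a ∈ m, m.count a ≤ j

open Finset

/-- Multiplying over the orbits of `τ` is the same as multiplying over its cycle lengths. -/
theorem prod_quotient_sameCycle {R : Type*} [CommMonoid R] {k : ℕ} (τ : Equiv.Perm (Fin k))
    [Fintype (Quotient (Equiv.Perm.SameCycle.setoid τ))]
    [DecidableEq (Quotient (Equiv.Perm.SameCycle.setoid τ))] (F : ℕ → R) :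
    ∏ q : Quotient (Equiv.Perm.SameCycle.setoid τ),
      F #{i | (Quotient.mk (Equiv.Perm.SameCycle.setoid τ) i) = q} =
      ((fullCycleType τ).map F).prod := by
  classical
  have hq : ∀ q : Quotient (Equiv.Perm.SameCycle.setoid τ), ∀ i,
      Quotient.mk (Equiv.Perm.SameCycle.setoid τ) i = q ↔ τ.SameCycle q.out i := by
    intro q i
    conv_lhs => rw [← q.out_eq]
    rw [Quotient.eq]
    exact Equiv.Perm.sameCycle_comm
  have hcycle : ((τ.cycleType).map F).prod = ∏ c ∈ τ.cycleFactorsFinset, F #c.support := by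
    rw [Equiv.Perm.cycleType_def, Multiset.map_map]
    rfl
  have hfix : k - #τ.support = #(τ.supportᶜ) := by rw [card_compl, Fintype.card_fin]
  rw [fullCycleType, Multiset.map_add, Multiset.prod_add, hcycle, Multiset.map_replicate,
    Multiset.prod_replicate, hfix, ← prod_const,
    ← prod_filter_mul_prod_filter_not univ (fun q => q.out ∈ τ.support)]
  congr 1
  · refine prod_bij (fun q _ => τ.cycleOf q.out) ?_ ?_ ?_ ?_
    · intro q h
      exact Equiv.Perm.cycleOf_mem_cycleFactorsFinset_iff.2 (mem_filter.1 h).2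
    · intro q h r h' e
      rw [← q.out_eq, hq, Equiv.Perm.sameCycle_comm,
        Equiv.Perm.sameCycle_iff_cycleOf_eq_of_mem_support (mem_filter.1 h).2 (mem_filter.1 h').2]
      exact e
    · intro c hc
      obtain ⟨a, ha⟩ := (Equiv.Perm.mem_cycleFactorsFinset_iff.1 hc).1.nonempty_support
      have hs : τ.SameCycle (Quotient.mk (Equiv.Perm.SameCycle.setoid τ) a).out a :=
        (hq _ _).1 rfl
      have haτ : a ∈ τ.support := Equiv.Perm.mem_cycleFactorsFinset_support_le hc ha
      refine ⟨Quotient.mk _ a, ?_, ?_⟩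
      · simpa using hs.apply_eq_self_iff.not.2 (Equiv.Perm.mem_support.1 haτ)
      · rw [hs.cycleOf_eq, ← Equiv.Perm.cycle_is_cycleOf ha hc]
    · intro q h
      congr 2
      ext i
      simp only [mem_filter, mem_univ, true_and, hq]
      rw [Equiv.Perm.mem_support_cycleOf_iff' (Equiv.Perm.mem_support.1 (mem_filter.1 h).2)]
  · refine prod_bij (fun q _ => q.out) ?_ ?_ ?_ ?_
    · intro q h
      simpa using h
    · intro q h r h' e
      exact Quotient.out_injective e
    · intro a ha
      have hs : τ.SameCycle (Quotient.mk (Equiv.Perm.SameCycle.setoid τ) a).out a :=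
        (hq _ _).1 rfl
      have ha' : τ a = a := by simpa using ha
      refine ⟨Quotient.mk _ a, ?_, ?_⟩
      · simpa using hs.apply_eq_self_iff.2 ha'
      · exact (hs.symm.eq_of_left ha').symm
    · intro q h
      congr 1
      rw [card_eq_one]
      refine ⟨q.out, ?_⟩
      ext i
      simp only [mem_filter, mem_univ, true_and, hq, mem_singleton]
      have hf : τ q.out = q.out := by simpa using h
      exact ⟨fun h => (h.eq_of_left hf).symm, fun h => h ▸ Equiv.Perm.SameCycle.refl _ _⟩

/-- The weighted count of colourings constant on the cycles of `τ`. -/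
theorem sum_prod_of_comp_perm_eq {R κ : Type*} [CommSemiring R] [Fintype κ] [DecidableEq κ] {k : ℕ}
    (τ : Equiv.Perm (Fin k)) (u : κ → R) :
    ∑ f : Fin k → κ with f ∘ τ = f, ∏ i, u (f i) =
      ((fullCycleType τ).map fun ℓ => ∑ c, u c ^ ℓ).prod := by
  classical
  rw [← prod_quotient_sameCycle, Finset.prod_univ_sum, Fintype.piFinset_univ]
  symm
  refine sum_bij (fun g _ i => g (Quotient.mk _ i)) ?_ ?_ ?_ ?_
  · intro g _
    rw [mem_filter]
    refine ⟨mem_univ _, funext fun i => congrArg g ?_⟩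
    exact Quotient.sound (Equiv.Perm.sameCycle_apply_left.2 (Equiv.Perm.SameCycle.refl _ _))
  · intro g _ g' _ h
    funext q
    induction q using Quotient.inductionOn with
    | h i => exact congrFun h i
  · intro f hf
    have hf' : ∀ i, f (τ i) = f i := fun i => congrFun (mem_filter.1 hf).2 i
    refine ⟨fun q => Quotient.lift f ?_ q, mem_univ _, rfl⟩
    rintro a b h
    obtain ⟨n, -, rfl⟩ := Equiv.Perm.SameCycle.exists_pow_eq' (f := τ) h
    clear h
    induction n with
    | zero => rfl
    | succ n ih => rw [pow_succ', Equiv.Perm.mul_apply, hf']; exact ih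
  · intro g _
    rw [← Finset.prod_fiberwise univ (Quotient.mk (Equiv.Perm.SameCycle.setoid τ))]
    refine prod_congr rfl fun q _ => ?_
    rw [← prod_const]
    refine prod_congr rfl fun i hi => ?_
    exact congrArg (fun r => u (g r)) (mem_filter.1 hi).2.symm

theorem count_msetOf {D : Type*} [DecidableEq D] {k : ℕ} (x : Fin k → D) (a : D) :
    (msetOf x).count a = #{i | x i = a} := by
  rw [msetOf, ← Fin.univ_val_map, Multiset.count_map]
  simp only [eq_comm (a := a)]
  rfl

theorem msetOf_comp_perm {D : Type*} {k : ℕ} (x : Fin k → D) (τ : Equiv.Perm (Fin k)) :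
    msetOf (x ∘ τ) = msetOf x :=
  Multiset.coe_eq_coe.2 (Equiv.Perm.ofFn_comp_perm τ x)

theorem exists_perm_of_msetOf_eq {D : Type*} {k : ℕ} {x y : Fin k → D}
    (h : msetOf x = msetOf y) : ∃ τ : Equiv.Perm (Fin k), x ∘ τ = y := by
  classical
  have hcard : ∀ a, Fintype.card {i // y i = a} = Fintype.card {i // x i = a} := fun a => by
    rw [Fintype.card_subtype, Fintype.card_subtype]
    exact (count_msetOf y a).symm.trans ((congrArg (Multiset.count a) h.symm).trans
      (count_msetOf x a))
  exact ⟨Equiv.ofFiberEquiv fun a => Fintype.equivOfCardEq (hcard a),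
    funext fun i => Equiv.ofFiberEquiv_map _ i⟩

/-- The power sums of the nontrivial `(j+1)`-st roots of unity. -/
theorem sum_nontrivial_roots_pow {j : ℕ} {ζ : ℂ} (hζ : IsPrimitiveRoot ζ (j + 1)) (ℓ : ℕ) :
    ∑ c : Fin j, (ζ ^ (c.val + 1)) ^ ℓ =
      -(1 - ((j : ℂ) + 1) * (if (j + 1) ∣ ℓ then 1 else 0)) := by
  have hsum : ∑ c : Fin j, (ζ ^ (c.val + 1)) ^ ℓ = ∑ i ∈ range (j + 1), (ζ ^ ℓ) ^ i - 1 := by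
    rw [sum_range_succ', pow_zero, add_sub_cancel_right,
      Fin.sum_univ_eq_sum_range (fun c => (ζ ^ (c + 1)) ^ ℓ)]
    exact sum_congr rfl fun i _ => pow_right_comm _ _ _
  rw [hsum]
  split_ifs with hdvd
  · rw [(hζ.pow_eq_one_iff_dvd ℓ).2 hdvd]
    simp
  · have hne : ζ ^ ℓ - 1 ≠ 0 := sub_ne_zero.2 (mt (hζ.pow_eq_one_iff_dvd ℓ).1 hdvd)
    have hzero : ∑ i ∈ range (j + 1), (ζ ^ ℓ) ^ i = 0 := by
      apply (mul_eq_zero.1 _).resolve_left hne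
      rw [mul_geom_sum, pow_right_comm, hζ.pow_eq_one, one_pow, sub_self]
    rw [hzero]
    ring

theorem sign_eq_neg_one_pow_card_fullCycleType {k : ℕ} (τ : Equiv.Perm (Fin k)) :
    (Equiv.Perm.sign τ : ℤ) = (-1) ^ k * (-1) ^ Multiset.card (fullCycleType τ) := by
  have hle : #τ.support ≤ k := by simpa using card_le_univ τ.support
  obtain ⟨m, hm⟩ := Nat.exists_eq_add_of_le hle
  rw [Equiv.Perm.sign_of_cycleType, Equiv.Perm.sum_cycleType, fullCycleType, Multiset.card_add,
    Multiset.card_replicate]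
  have hsub : k - #τ.support = m := by omega
  have hsq : ((-1 : ℤ) ^ m) * (-1) ^ m = 1 := by rw [← mul_pow]; simp
  have hk : (-1 : ℤ) ^ k = (-1) ^ #τ.support * (-1) ^ m := by rw [← pow_add, ← hm]
  rw [hsub, hk]
  push_cast
  rw [pow_add, pow_add]
  linear_combination (-(-1 : ℤ) ^ #τ.support * (-1) ^ Multiset.card τ.cycleType) * hsq

/-- The weight `w_j(τ)` as a signed sum over colourings by nontrivial roots of unity. -/
theorem wj_eq_sign_mul_sum {k j : ℕ} {ζ : ℂ} (hζ : IsPrimitiveRoot ζ (j + 1))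
    (τ : Equiv.Perm (Fin k)) :
    (wj j τ : ℂ) = (-1) ^ k * ((Equiv.Perm.sign τ : ℤ) : ℂ) *
      ∑ f : Fin k → Fin j, if f ∘ τ = f then ∏ i, ζ ^ ((f i).val + 1) else 0 := by
  rw [← sum_filter, sum_prod_of_comp_perm_eq τ (fun c : Fin j => ζ ^ (c.val + 1))]
  simp only [sum_nontrivial_roots_pow hζ]
  have hneg : ∀ F : ℕ → ℂ, ((fullCycleType τ).map fun ℓ => -F ℓ).prod =
      (-1) ^ Multiset.card (fullCycleType τ) * ((fullCycleType τ).map F).prod := fun F => by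
    rw [← Multiset.card_map F, ← Multiset.prod_map_neg, Multiset.map_map]
    rfl
  rw [hneg, sign_eq_neg_one_pow_card_fullCycleType, wj]
  have hcast : ((((fullCycleType τ).map fun ℓ =>
      1 - ((j : ℤ) + 1) * (if (j + 1) ∣ ℓ then 1 else 0)).prod : ℤ) : ℂ) =
      ((fullCycleType τ).map fun ℓ =>
        1 - ((j : ℂ) + 1) * (if (j + 1) ∣ ℓ then 1 else 0)).prod := by
    rw [← eq_intCast (Int.castRingHom ℂ), map_multiset_prod, Multiset.map_map]
    congr 2
    funext ℓ
    simp
  have hsq : ∀ m : ℕ, ((-1 : ℂ) ^ m) * (-1) ^ m = 1 := fun m => by rw [← mul_pow]; simp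
  rw [hcast]
  push_cast
  rw [← mul_assoc, ← mul_assoc ((-1 : ℂ) ^ k), hsq, one_mul, hsq, one_mul]

/-- If `x` has no value of multiplicity above `j`, then `w_j` is `1` on the stabilizer of `x`. -/
theorem wj_eq_one_of_comp_eq {D : Type*} [DecidableEq D] {k j : ℕ} {x : Fin k → D}
    (hx : ∀ a, #{i | x i = a} ≤ j) {τ : Equiv.Perm (Fin k)} (hτ : x ∘ τ = x) :
    wj j τ = 1 := by
  classical
  rw [wj, ← prod_quotient_sameCycle]
  refine prod_eq_one fun q _ => ?_
  have hlt : #{i | Quotient.mk (Equiv.Perm.SameCycle.setoid τ) i = q} < j + 1 := by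
    refine Nat.lt_succ_of_le ((card_le_card fun i hi => ?_).trans (hx (x q.out)))
    have hs : τ.SameCycle i q.out := by
      apply Quotient.exact (s := Equiv.Perm.SameCycle.setoid τ)
      rw [q.out_eq]
      exact (mem_filter.1 hi).2
    obtain ⟨n, -, hn⟩ := hs.exists_pow_eq'
    rw [mem_filter, ← hn]
    refine ⟨mem_univ _, ?_⟩
    clear hn
    induction n with
    | zero => rfl
    | succ n ih => rw [pow_succ', Equiv.Perm.mul_apply, ih]; exact (congrFun hτ _).symm
  have hpos : 0 < #{i | Quotient.mk (Equiv.Perm.SameCycle.setoid τ) i = q} :=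
    card_pos.2 ⟨q.out, by simp⟩
  rw [if_neg (Nat.not_dvd_of_pos_of_lt hpos hlt)]
  simp

/-- If some value of `x` has multiplicity above `j`, then the weights `w_j` cancel on the
stabilizer of `x`. -/
theorem sum_wj_eq_zero {D : Type*} [DecidableEq D] {k j : ℕ} {x : Fin k → D} {a : D}
    (hx : j < #{i | x i = a}) :
    ∑ τ ∈ univ.filter fun τ : Equiv.Perm (Fin k) => x ∘ τ = x, wj j τ = 0 := by
  have hζ := Complex.isPrimitiveRoot_exp (j + 1) j.succ_ne_zero
  have hC : ((∑ τ ∈ univ.filter fun τ : Equiv.Perm (Fin k) => x ∘ τ = x, wj j τ : ℤ) : ℂ) = 0 := by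
    push_cast
    simp only [wj_eq_sign_mul_sum hζ, mul_sum]
    rw [sum_comm]
    refine sum_eq_zero fun f _ => ?_
    obtain ⟨p, hp, q, hq, hpq, hf⟩ := exists_ne_map_eq_of_card_lt_of_maps_to
      (s := ({i | x i = a} : Finset (Fin k))) (t := (univ : Finset (Fin j))) (f := f)
      (by simpa using hx) (fun _ _ => mem_univ _)
    have hxs : x ∘ Equiv.swap p q = x := by
      funext i
      have hp' : x p = a := by simpa using hp
      have hq' : x q = a := by simpa using hq
      simp only [Function.comp, Equiv.swap_apply_def]
      split_ifs with h1 h2 <;> simp_all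
    have hfs : f ∘ Equiv.swap p q = f := by
      funext i
      simp only [Function.comp, Equiv.swap_apply_def]
      split_ifs with h1 h2 <;> simp_all
    refine sum_involution (fun τ _ => Equiv.swap p q * τ) ?_ ?_ ?_ ?_
    · intro τ _
      have hiff : f ∘ ⇑(Equiv.swap p q * τ) = f ↔ f ∘ τ = f := by
        rw [Equiv.Perm.coe_mul, ← Function.comp_assoc, hfs]
      simp only [hiff, Equiv.Perm.sign_mul, Equiv.Perm.sign_swap hpq]
      push_cast
      ring
    · intro τ _ _ h
      exact hpq (Equiv.swap_eq_one_iff.1 (mul_eq_right.1 h))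
    · intro τ hτ
      rw [mem_filter, Equiv.Perm.coe_mul, ← Function.comp_assoc, hxs]
      exact ⟨mem_univ _, (mem_filter.1 hτ).2⟩
    · intro τ _
      rw [← mul_assoc, Equiv.swap_mul_self, one_mul]
  exact_mod_cast hC

/-- Orbit counting: the stabilizers along the tuples with a given multiset. -/
theorem sum_card_stabilizer_eq_factorial {D : Type*} [DecidableEq D] {k : ℕ}
    {X : Finset (Fin k → D)} (hX : ∀ x ∈ X, ∀ τ : Equiv.Perm (Fin k), x ∘ τ ∈ X)
    {m : Multiset D} (hm : m ∈ MX X) :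
    ∑ x ∈ X with msetOf x = m, #{τ : Equiv.Perm (Fin k) | x ∘ τ = x} = Nat.factorial k := by
  obtain ⟨x₀, hx₀, rfl⟩ := mem_image.1 hm
  have hcard : Nat.factorial k = #(univ : Finset (Equiv.Perm (Fin k))) := by
    rw [card_univ, Fintype.card_perm, Fintype.card_fin]
  rw [hcard, card_eq_sum_card_fiberwise (f := fun τ : Equiv.Perm (Fin k) => x₀ ∘ τ)
    (t := {x ∈ X | msetOf x = msetOf x₀})
    (fun τ _ => by simpa using ⟨hX x₀ hx₀ τ, msetOf_comp_perm x₀ τ⟩)]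
  refine sum_congr rfl fun x hx => ?_
  obtain ⟨ρ, rfl⟩ := exists_perm_of_msetOf_eq (mem_filter.1 hx).2.symm
  refine card_equiv (Equiv.mulLeft ρ) fun τ => ?_
  simp [Function.comp_assoc]

/-- For a finite symmetric `X ⊆ D^k` and a positive integer `j`,
`k!·|M_j(X)| = Σ_{τ ∈ S_k} w_j(τ)·|X_τ|`. -/
theorem multiset_sieve_mult_le {D : Type*} [DecidableEq D] (k j : ℕ) (hk : 0 < k)
    (hj : 0 < j) (X : Finset (Fin k → D))
    (hX : ∀ x ∈ X, ∀ τ : Equiv.Perm (Fin k), x ∘ τ ∈ X) :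
    (Nat.factorial k : ℤ) * ((Mj j X).card : ℤ) =
      ∑ τ : Equiv.Perm (Fin k), wj j τ * ((X.filter fun x => x ∘ τ = x).card : ℤ) := by
  have hswap : ∑ τ : Equiv.Perm (Fin k), wj j τ * ((X.filter fun x => x ∘ τ = x).card : ℤ) =
      ∑ x ∈ X, ∑ τ ∈ univ.filter fun τ : Equiv.Perm (Fin k) => x ∘ τ = x, wj j τ := by
    simp only [card_filter, Nat.cast_sum, mul_sum, sum_filter]
    rw [sum_comm]
    simp
  rw [hswap, ← sum_fiberwise_of_maps_to (t := MX X) (g := msetOf)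
    (fun x hx => mem_image_of_mem _ hx), Mj, card_filter, Nat.cast_sum, mul_sum]
  refine sum_congr rfl fun m hm => ?_
  split_ifs with hgood
  · rw [← sum_card_stabilizer_eq_factorial hX hm]
    push_cast
    rw [mul_one]
    refine sum_congr rfl fun x hx => ?_
    have hx' : ∀ a, #{i | x i = a} ≤ j := by
      intro a
      rw [← count_msetOf, (mem_filter.1 hx).2]
      by_cases ha : a ∈ m
      · exact hgood a ha
      · rw [Multiset.count_eq_zero_of_notMem ha]
        exact hj.le
    rw [sum_congr rfl fun τ hτ => wj_eq_one_of_comp_eq hx' (mem_filter.1 hτ).2]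
    simp
  · push Not at hgood
    obtain ⟨a, -, ha⟩ := hgood
    rw [Nat.cast_zero, mul_zero]
    refine (sum_eq_zero fun x hx => sum_wj_eq_zero (a := a) ?_).symm
    rwa [← count_msetOf, (mem_filter.1 hx).2]
end

section
/- Let j and k be positive integers. Then Σ N'(a_1,…,a_k)·1!^{a_1}·2!^{a_2}⋯k!^{a_k}·(−1)^{a_1+⋯+a_k−1}·(a_1+⋯+a_k−1)! = (k−1)!·(1 − (j+1)·[(j+1) ∣ k]), where the sum is over all tuples (a_1,…,a_k) of non-negative integers with Σ_{i=1}^{k} i·a_i = k and a_{j+1} = a_{j+2} = ⋯ = a_k = 0, and [P] denotes 1 if P holds and 0 otherwise. (Equivalently, each summand equals (−1)^{a_1+⋯+a_k−1}·(a_1+⋯+a_k−1)!·k!/(a_1!·a_2!⋯a_k!).) -/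
open PowerSeries in
/-- The coefficients of a power of a truncation of `X + X ^ 2 + ⋯ + X ^ j`. -/
theorem coeff_pow_sum_eq_sum_piAntidiag (j k s : ℕ) :
    coeff k ((∑ i : Fin k, if (i : ℕ) < j then (X : ℚ⟦X⟧) ^ ((i : ℕ) + 1) else 0) ^ s) =
      ∑ a ∈ (Finset.piAntidiag (Finset.univ : Finset (Fin k)) s).filter
        (fun a : Fin k → ℕ =>
          (∑ i : Fin k, ((i : ℕ) + 1) * a i) = k ∧ ∀ i : Fin k, j < (i : ℕ) + 1 → a i = 0),
      (s.factorial : ℚ) / ∏ i : Fin k, ((a i).factorial : ℚ) := by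
  rw [Finset.sum_pow_eq_sum_piAntidiag, map_sum, Finset.sum_filter]
  refine Finset.sum_congr rfl fun a ha => ?_
  have hs : ∑ i, a i = s := by simpa using ha
  have hmult : (Nat.multinomial Finset.univ a : ℚ) =
      (s.factorial : ℚ) / ∏ i : Fin k, ((a i).factorial : ℚ) := by
    rw [eq_div_iff (Finset.prod_ne_zero_iff.2 fun i _ => by positivity), mul_comm]
    have h := Nat.multinomial_spec Finset.univ a
    rw [hs] at h
    exact_mod_cast h
  have hprod : (∏ i : Fin k, (if (i : ℕ) < j then (X : ℚ⟦X⟧) ^ ((i : ℕ) + 1) else 0) ^ a i) =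
      if ∀ i : Fin k, j < (i : ℕ) + 1 → a i = 0
        then X ^ (∑ i : Fin k, ((i : ℕ) + 1) * a i) else 0 := by
    split_ifs with h
    · rw [← Finset.prod_pow_eq_pow_sum]
      refine Finset.prod_congr rfl fun i _ => ?_
      split_ifs with hi
      · rw [pow_mul]
      · simp [h i (by omega)]
    · push Not at h
      obtain ⟨i, hi, hai⟩ := h
      refine Finset.prod_eq_zero (Finset.mem_univ i) ?_
      rw [if_neg (by omega), zero_pow hai]
  rw [hprod, ← map_natCast (C (R := ℚ)), coeff_C_mul, hmult]
  by_cases h : ∀ i : Fin k, j < (i : ℕ) + 1 → a i = 0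
  · rw [if_pos h, coeff_X_pow]
    simp only [eq_comm (a := k), and_iff_left h, mul_ite, mul_one, mul_zero]
  · rw [if_neg h, if_neg fun h' => h h'.2]
    simp

open PowerSeries in
/-- The logarithmic derivative of `1 + X + ⋯ + X ^ j`, with its coefficients made explicit. -/
theorem one_add_sum_mul_mk_eq_derivative (j : ℕ) :
    (1 + ∑ i ∈ Finset.range j, (X : ℚ⟦X⟧) ^ (i + 1)) *
        PowerSeries.mk (fun n => 1 - ((j : ℚ) + 1) * (if (j + 1) ∣ n + 1 then 1 else 0)) =
      derivative ℚ (∑ i ∈ Finset.range j, (X : ℚ⟦X⟧) ^ (i + 1)) := by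
  set P : ℚ⟦X⟧ := ∑ i ∈ Finset.range j, X ^ (i + 1) with hP
  set T : ℚ⟦X⟧ :=
    PowerSeries.mk (fun n => 1 - ((j : ℚ) + 1) * (if (j + 1) ∣ n + 1 then 1 else 0)) with hT
  have hgeom : (1 - X) * (1 + P) = 1 - X ^ (j + 1) := by
    have h : 1 + P = ∑ i ∈ Finset.range (j + 1), (X : ℚ⟦X⟧) ^ i := by
      rw [Finset.sum_range_succ', hP, add_comm, pow_zero]
    rw [h, mul_neg_geom_sum]
  have hderiv : (1 - X) * derivative ℚ P = 1 + P - ((j : ℚ⟦X⟧) + 1) * X ^ j := by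
    have h := congrArg (derivative ℚ) hgeom
    simp only [Derivation.leibniz, map_sub, map_add, Derivation.leibniz_pow, smul_eq_mul,
      Derivation.map_one_eq_zero, derivative_X, nsmul_eq_mul, Nat.add_sub_cancel] at h
    push_cast at h
    linear_combination h
  have hone : (1 - X) * PowerSeries.mk (fun _ => (1 : ℚ)) = 1 := by
    rw [mul_comm]
    exact mk_one_mul_one_sub_eq_one ℚ
  set H : ℚ⟦X⟧ := PowerSeries.mk (fun n => if (j + 1) ∣ n + 1 then (1 : ℚ) else 0) with hH
  have hHmul : (1 - X ^ (j + 1)) * H = X ^ j := by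
    ext n
    rw [sub_mul, one_mul, map_sub, coeff_X_pow_mul', coeff_X_pow, hH, coeff_mk]
    by_cases hn : j + 1 ≤ n
    · have hdvd : (j + 1) ∣ n + 1 ↔ (j + 1) ∣ n - (j + 1) + 1 := by
        rw [show n + 1 = (n - (j + 1) + 1) + (j + 1) by omega]
        exact Nat.dvd_add_self_right
      rw [if_pos hn, coeff_mk, if_neg (show n ≠ j by omega)]
      simp [hdvd]
    · rw [if_neg hn, sub_zero]
      by_cases hnj : n = j
      · simp [hnj]
      · rw [if_neg hnj, if_neg fun h => hnj ?_]
        have := Nat.le_of_dvd (Nat.succ_pos n) h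
        omega
  have hTsplit : T = PowerSeries.mk (fun _ => (1 : ℚ)) - ((j : ℚ⟦X⟧) + 1) * H := by
    ext n
    rw [show (j : ℚ⟦X⟧) + 1 = C ((j : ℚ) + 1) by simp, map_sub, coeff_C_mul, hT, hH]
    simp only [coeff_mk]
  have hX : (1 - X : ℚ⟦X⟧) ≠ 0 := left_ne_zero_of_mul_eq_one hone
  refine mul_left_cancel₀ hX ?_
  rw [hderiv, hTsplit]
  linear_combination (1 + P) * hone - ((j : ℚ⟦X⟧) + 1) * (hHmul + H * hgeom)

open PowerSeries in
/-- The coefficients of `log (1 + X + ⋯ + X ^ j)`. -/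
theorem sum_neg_one_pow_div_mul_coeff_pow (j k : ℕ) (hk : 0 < k) :
    ∑ s ∈ Finset.range k, (-1 : ℚ) ^ s / ((s : ℚ) + 1) *
        coeff k ((∑ i ∈ Finset.range j, (X : ℚ⟦X⟧) ^ (i + 1)) ^ (s + 1)) =
      (1 - ((j : ℚ) + 1) * (if (j + 1) ∣ k then 1 else 0)) / k := by
  obtain ⟨m, rfl⟩ : ∃ m, k = m + 1 := ⟨k - 1, by omega⟩
  have hT := one_add_sum_mul_mk_eq_derivative j
  set P : ℚ⟦X⟧ := ∑ i ∈ Finset.range j, X ^ (i + 1) with hP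
  set T : ℚ⟦X⟧ :=
    PowerSeries.mk (fun n => 1 - ((j : ℚ) + 1) * (if (j + 1) ∣ n + 1 then 1 else 0)) with hTdef
  have hXP : X ∣ P := Finset.dvd_sum fun i _ => dvd_pow_self X i.succ_ne_zero
  have hcoeff (s : ℕ) : (-1 : ℚ) ^ s / ((s : ℚ) + 1) * coeff (m + 1) (P ^ (s + 1)) =
      coeff m ((-P) ^ s * derivative ℚ P) / ((m : ℚ) + 1) := by
    have h := coeff_derivative (P ^ (s + 1)) m
    rw [Derivation.leibniz_pow, Nat.add_sub_cancel, nsmul_eq_mul, smul_eq_mul,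
      ← map_natCast (C (R := ℚ)), coeff_C_mul] at h
    rw [neg_pow P, mul_assoc, show (-1 : ℚ⟦X⟧) ^ s = C ((-1 : ℚ) ^ s) by simp, coeff_C_mul]
    push_cast at h
    have h1 : (s : ℚ) + 1 ≠ 0 := by positivity
    have h2 : (m : ℚ) + 1 ≠ 0 := by positivity
    field_simp
    linear_combination -h
  rw [Finset.sum_congr rfl fun s _ => hcoeff s, ← Finset.sum_div, ← map_sum, ← Finset.sum_mul]
  have hgeom : (∑ s ∈ Finset.range (m + 1), (-P) ^ s) * derivative ℚ P =
      T - (-P) ^ (m + 1) * T := by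
    rw [← hT]
    linear_combination T * geom_sum_mul_neg (-P) (m + 1)
  have hzero : coeff m ((-P) ^ (m + 1) * T) = 0 :=
    X_pow_dvd_iff.1 (((pow_dvd_pow_of_dvd ((dvd_neg).2 hXP) (m + 1))).mul_right T) m (by omega)
  rw [hgeom, map_sub, hzero, sub_zero, hTdef, coeff_mk]
  push_cast
  rfl

open PowerSeries in
/-- Only the terms of degree at most `k` contribute to the `k`-th coefficient of a power. -/
theorem coeff_pow_sum_fin_eq_coeff_pow_sum_range (j k s : ℕ) :
    coeff k ((∑ i : Fin k, if (i : ℕ) < j then (X : ℚ⟦X⟧) ^ ((i : ℕ) + 1) else 0) ^ s) =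
      coeff k ((∑ i ∈ Finset.range j, (X : ℚ⟦X⟧) ^ (i + 1)) ^ s) := by
  rw [← sub_eq_zero, ← map_sub]
  refine X_pow_dvd_iff.1 (dvd_trans ?_ (sub_dvd_pow_sub_pow _ _ s)) k k.lt_succ_self
  rw [Fin.sum_univ_eq_sum_range (fun i => if i < j then (X : ℚ⟦X⟧) ^ (i + 1) else 0),
    ← Finset.sum_filter, X_pow_dvd_iff]
  intro n hn
  rw [map_sub, map_sum, map_sum, sub_eq_zero]
  refine Finset.sum_subset (fun i hi => by simp_all) fun i hi hi' => ?_
  rw [coeff_X_pow, if_neg]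
  simp only [Finset.mem_filter, Finset.mem_range] at hi hi'
  omega

/-- **Combinatorial identity for blocks of bounded size.**  For positive integers `j, k`,
`Σ N'(a_1,…,a_k)·1!^{a_1}⋯k!^{a_k}·(−1)^{s−1}·(s−1)! = (k−1)!·(1 − (j+1)·[(j+1) ∣ k])`,
the sum being over tuples of non-negative integers with `Σ i·a_i = k` and
`a_i = 0` for `i > j`, and `s = a_1 + ⋯ + a_k`.  Each summand equals
`(−1)^{s−1}·(s−1)!·k!/(a_1!⋯a_k!)`, which is how it is written here (in `ℚ`). -/
theorem partition_identity_bounded_blocks (j k : ℕ) (hj : 0 < j) (hk : 0 < k) :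
    ∑ a ∈ (Fintype.piFinset fun _ : Fin k => Finset.range (k + 1)).filter
        (fun a : Fin k → ℕ =>
          (∑ i : Fin k, ((i : ℕ) + 1) * a i) = k ∧ ∀ i : Fin k, j < (i : ℕ) + 1 → a i = 0),
      (-1 : ℚ) ^ ((∑ i : Fin k, a i) - 1) * (((∑ i : Fin k, a i) - 1).factorial : ℚ) *
        (k.factorial : ℚ) / ∏ i : Fin k, ((a i).factorial : ℚ) =
      ((k - 1).factorial : ℚ) * (1 - ((j : ℚ) + 1) * (if (j + 1) ∣ k then 1 else 0)) := by
  have hle (a : Fin k → ℕ) (ha : (∑ i : Fin k, ((i : ℕ) + 1) * a i) = k) :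
      ∑ i, a i ≤ k := by
    conv_rhs => rw [← ha]
    exact Finset.sum_le_sum fun i _ => Nat.le_mul_of_pos_left _ i.val.succ_pos
  have hpos (a : Fin k → ℕ) (ha : (∑ i : Fin k, ((i : ℕ) + 1) * a i) = k) :
      0 < ∑ i, a i := by
    rw [Nat.pos_iff_ne_zero]
    intro h
    rw [Finset.sum_eq_zero_iff] at h
    rw [Finset.sum_eq_zero fun i hi => by rw [h i hi, mul_zero]] at ha
    omega
  have hfact : (k.factorial : ℚ) = k * ((k - 1).factorial : ℚ) := by
    exact_mod_cast (Nat.mul_factorial_pred hk.ne').symm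
  have hk0 : (k : ℚ) ≠ 0 := by positivity
  have hmain := sum_neg_one_pow_div_mul_coeff_pow j k hk
  rw [eq_div_iff hk0] at hmain
  rw [← hmain, ← Finset.sum_fiberwise_of_maps_to (t := Finset.range k)
    (g := fun a : Fin k → ℕ => (∑ i, a i) - 1), mul_comm, mul_assoc, ← hfact, Finset.sum_mul]
  · refine Finset.sum_congr rfl fun s _ => ?_
    rw [← coeff_pow_sum_fin_eq_coeff_pow_sum_range, coeff_pow_sum_eq_sum_piAntidiag,
      Finset.mul_sum, Finset.sum_mul]
    refine Finset.sum_congr ?_ fun a ha => ?_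
    · ext a
      simp only [Finset.mem_filter, Fintype.mem_piFinset, Finset.mem_range,
        Finset.mem_piAntidiag, Finset.mem_univ, implies_true, and_true]
      constructor
      · rintro ⟨⟨-, h, h'⟩, hs⟩
        have := hpos a h
        exact ⟨show ∑ i, a i = s + 1 by omega, h, h'⟩
      · rintro ⟨hs, h, h'⟩
        replace hs : ∑ i, a i = s + 1 := hs
        refine ⟨⟨fun i => ?_, h, h'⟩, by omega⟩
        have := Finset.single_le_sum (f := a) (fun _ _ => Nat.zero_le _) (Finset.mem_univ i)
        have := hle a h
        omega
    · have hs : ∑ i, a i = s + 1 := by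
        simp only [Finset.mem_filter, Finset.mem_piAntidiag] at ha
        exact ha.1.1
      have hs0 : (s : ℚ) + 1 ≠ 0 := by positivity
      have hprod : ∏ i : Fin k, ((a i).factorial : ℚ) ≠ 0 :=
        Finset.prod_ne_zero_iff.2 fun i _ => by positivity
      rw [hs, Nat.add_sub_cancel, Nat.factorial_succ]
      push_cast
      field_simp
  · intro a ha
    simp only [Finset.mem_filter] at ha
    have := hle a ha.2.1
    have := hpos a ha.2.1
    exact Finset.mem_range.2 (by omega)
end

section
/- Let k and d be positive integers with 1 ≤ d ≤ k. Then Σ N'(a_1,…,a_k)·1!^{a_1}·2!^{a_2}⋯k!^{a_k}·(−1)^{a_1+⋯+a_k−1}·(a_1+⋯+a_k−1)! = (k−1)!·(−1)^{d−1}·binom(k,d), where the sum is over all tuples (a_1,…,a_k) of non-negative integers with Σ_{i=1}^{k} i·a_i = k and a_1+⋯+a_k = d. (Equivalently, each summand equals (−1)^{d−1}·(d−1)!·k!/(a_1!·a_2!⋯a_k!).) -/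
open Finset PowerSeries in
/-- The number of compositions of `k` into `d + 1` parts, as a coefficient of a power of the
truncated geometric series. -/
theorem coeff_sum_X_pow_succ_pow (k d : ℕ) (hdk : d + 1 ≤ k) :
    coeff k ((∑ i : Fin k, (X : ℚ⟦X⟧) ^ ((i : ℕ) + 1)) ^ (d + 1)) = ((k - 1).choose d : ℚ) := by
  have hgeom : ∑ i : Fin k, (X : ℚ⟦X⟧) ^ ((i : ℕ) + 1) =
      X * ((trunc k (mk 1 : ℚ⟦X⟧) : Polynomial ℚ) : ℚ⟦X⟧) := by
    rw [Fin.sum_univ_eq_sum_range (fun i => (X : ℚ⟦X⟧) ^ (i + 1)) k]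
    ext n
    rcases n with _ | n
    · simp [coeff_zero_eq_constantCoeff]
    · simp [coeff_succ_X_mul, coeff_trunc, coeff_X_pow]
  obtain ⟨m, rfl⟩ := Nat.exists_eq_add_of_le' hdk
  rw [hgeom, mul_pow, coeff_X_pow_mul, ← coeff_coe_trunc_of_lt (show m < m + (d + 1) by omega),
    trunc_trunc_pow, coeff_coe_trunc_of_lt (by omega), mk_one_pow_eq_mk_choose_add, coeff_mk,
    show m + (d + 1) - 1 = d + m by omega]

open Finset PowerSeries in
/-- Compositions of `k` into `d + 1` parts, counted by the multiplicities of the part sizes. -/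
theorem sum_multinomial_eq_choose (k d : ℕ) (hdk : d + 1 ≤ k) :
    ∑ a ∈ (Fintype.piFinset fun _ : Fin k => range (k + 1)).filter
        (fun a : Fin k → ℕ => (∑ i : Fin k, ((i : ℕ) + 1) * a i) = k ∧ (∑ i : Fin k, a i) = d + 1),
      (Nat.multinomial univ a : ℚ) = ((k - 1).choose d : ℚ) := by
  have hindex : (Fintype.piFinset fun _ : Fin k => range (k + 1)).filter
        (fun a : Fin k → ℕ => (∑ i : Fin k, ((i : ℕ) + 1) * a i) = k ∧ (∑ i : Fin k, a i) = d + 1)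
      = (piAntidiag univ (d + 1)).filter (fun a => k = ∑ i : Fin k, ((i : ℕ) + 1) * a i) := by
    ext a
    simp only [mem_filter, Fintype.mem_piFinset, mem_range, mem_piAntidiag, mem_univ, implies_true,
      and_true]
    constructor
    · rintro ⟨-, h, h'⟩
      exact ⟨h', h.symm⟩
    · rintro ⟨h', h⟩
      refine ⟨fun i => ?_, h.symm, h'⟩
      have hle : a i ≤ univ.sum a := single_le_sum (fun j _ => Nat.zero_le (a j)) (mem_univ i)
      omega
  rw [← coeff_sum_X_pow_succ_pow k d hdk, sum_pow_eq_sum_piAntidiag, map_sum, hindex, sum_filter]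
  refine sum_congr rfl fun a _ => ?_
  simp_rw [← pow_mul, prod_pow_eq_pow_sum]
  rw [← map_natCast (C (R := ℚ)), coeff_C_mul, coeff_X_pow, mul_ite, mul_one, mul_zero]

/-- **Combinatorial identity for partitions with a fixed number of blocks.**  For
`1 ≤ d ≤ k`, `Σ N'(a_1,…,a_k)·1!^{a_1}⋯k!^{a_k}·(−1)^{s−1}·(s−1)! =
(k−1)!·(−1)^{d−1}·C(k,d)`, the sum being over tuples of non-negative integers with
`Σ i·a_i = k` and `a_1 + ⋯ + a_k = d`.  Each summand equals
`(−1)^{d−1}·(d−1)!·k!/(a_1!⋯a_k!)`, which is how it is written here (in `ℚ`). -/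
theorem partition_identity_fixed_blocks (k d : ℕ) (hd : 1 ≤ d) (hdk : d ≤ k) :
    ∑ a ∈ (Fintype.piFinset fun _ : Fin k => Finset.range (k + 1)).filter
        (fun a : Fin k → ℕ =>
          (∑ i : Fin k, ((i : ℕ) + 1) * a i) = k ∧ (∑ i : Fin k, a i) = d),
      (-1 : ℚ) ^ ((∑ i : Fin k, a i) - 1) * (((∑ i : Fin k, a i) - 1).factorial : ℚ) *
        (k.factorial : ℚ) / ∏ i : Fin k, ((a i).factorial : ℚ) =
      ((k - 1).factorial : ℚ) * (-1 : ℚ) ^ (d - 1) * (k.choose d : ℚ) := by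
  obtain ⟨d, rfl⟩ := Nat.exists_eq_add_of_le' hd
  obtain ⟨k, rfl⟩ := Nat.exists_eq_add_of_le' (hd.trans hdk)
  have hterm : ∀ a ∈ (Fintype.piFinset fun _ : Fin (k + 1) => Finset.range (k + 1 + 1)).filter
        (fun a : Fin (k + 1) → ℕ =>
          (∑ i : Fin (k + 1), ((i : ℕ) + 1) * a i) = k + 1 ∧ (∑ i : Fin (k + 1), a i) = d + 1),
      (-1 : ℚ) ^ ((∑ i, a i) - 1) * (((∑ i, a i) - 1).factorial : ℚ) *
        ((k + 1).factorial : ℚ) / ∏ i, ((a i).factorial : ℚ) =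
      (-1) ^ d * ((k + 1).factorial : ℚ) / (d + 1) * (Nat.multinomial Finset.univ a : ℚ) := by
    intro a ha
    obtain ⟨-, -, hsum⟩ := Finset.mem_filter.mp ha
    have hspec := congrArg (Nat.cast (R := ℚ)) (Nat.multinomial_spec Finset.univ a)
    rw [hsum, Nat.factorial_succ] at hspec
    push_cast at hspec
    have hprod : ∏ i, ((a i).factorial : ℚ) ≠ 0 :=
      Finset.prod_ne_zero_iff.mpr fun i _ => Nat.cast_ne_zero.mpr (Nat.factorial_ne_zero _)
    have hd0 : (d : ℚ) + 1 ≠ 0 := by positivity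
    rw [hsum, Nat.add_sub_cancel, div_eq_iff hprod, div_mul_eq_mul_div, div_mul_eq_mul_div,
      eq_div_iff hd0]
    linear_combination -((-1 : ℚ) ^ d * ((k + 1).factorial : ℚ)) * hspec
  have hchoose := congrArg (Nat.cast (R := ℚ)) (Nat.add_one_mul_choose_eq k d)
  push_cast at hchoose
  rw [Finset.sum_congr rfl hterm, ← Finset.mul_sum, sum_multinomial_eq_choose (k + 1) d hdk,
    Nat.add_sub_cancel, Nat.add_sub_cancel, Nat.factorial_succ, div_mul_eq_mul_div,
    div_eq_iff (by positivity)]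
  push_cast
  linear_combination (-1 : ℚ) ^ d * (k.factorial : ℚ) * hchoose
end

section
/- Let j and k be positive integers. Then Σ_{π} (∏_{B a block of π} |B|!)·μ(π, 1̂) = (k−1)!·(1 − (j+1)·[(j+1) ∣ k]), where the sum is over all set partitions π of {1,…,k} all of whose blocks have size at most j, and [P] denotes 1 if P holds and 0 otherwise. -/
open scoped Classical

open Finset

namespace Finpartition

variable {α R : Type*}

/-- Splitting off the block that contains a given element `a`: a weighted sum over the partitions
of `s` is a sum over the subsets of `s` containing `a` and the partitions of their complements. -/
lemma sum_prod_parts_eq_sum_part [DecidableEq α] [CommSemiring R] (w : Finset α → R)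
    {s : Finset α} {a : α} (ha : a ∈ s) :
    ∑ P : Finpartition s, ∏ B ∈ P.parts, w B =
      ∑ C ∈ s.powerset with a ∈ C, w C * ∑ Q : Finpartition (s \ C), ∏ B ∈ Q.parts, w B := by
  rw [← sum_fiberwise_of_maps_to (s := (univ : Finset (Finpartition s)))
    (t := s.powerset.filter (a ∈ ·)) (g := fun P => P.part a) (by simp [ha])]
  refine sum_congr rfl fun C hC => ?_
  obtain ⟨hCs, haC⟩ : C ⊆ s ∧ a ∈ C := by simpa using hC
  have hC0 : C ≠ ⊥ := ne_empty_of_mem haC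
  have hmem (P : Finpartition s) (hP : P ∈ univ.filter fun P : Finpartition s => P.part a = C) :
      C ∈ P.parts := by
    rw [← (mem_filter.1 hP).2]; exact P.part_mem.2 ha
  have hsup (P : Finpartition s) (hP : C ∈ P.parts) : (P.parts.erase C).sup id = s \ C := by
    have hdisj : Disjoint C ((P.parts.erase C).sup id) :=
      P.supIndep (erase_subset _ _) hP (notMem_erase _ _)
    have hs : C ∪ (P.parts.erase C).sup id = s := by
      have h := P.sup_parts
      rwa [← insert_erase hP, sup_insert] at h
    conv_rhs => rw [← hs]
    exact (union_sdiff_cancel_left hdisj).symm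
  have hnot (Q : Finpartition (s \ C)) : C ∉ Q.parts := fun h =>
    (mem_sdiff.1 (Q.le h haC)).2 haC
  rw [mul_sum]
  refine sum_bij' (fun P hP => P.ofSubset (erase_subset C P.parts) (hsup P (hmem P hP)))
    (fun Q _ => Q.extend hC0 sdiff_disjoint (sdiff_union_of_subset hCs)) ?_ ?_ ?_ ?_ ?_
  · simp
  · intro Q _
    simp only [mem_filter, mem_univ, true_and]
    exact part_eq_of_mem _ (mem_insert_self _ _) haC
  · intro P hP
    ext1
    simp [extend, ofSubset, insert_erase (hmem P hP)]
  · intro Q _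
    ext1
    simp [extend, ofSubset, erase_insert (hnot Q)]
  · intro P hP
    exact (mul_prod_erase _ _ (hmem P hP)).symm

end Finpartition

/-- A sum over the subsets of `s` containing `a` of a function of the cardinality. -/
lemma sum_powerset_mem_apply_card {α M : Type*} [DecidableEq α] [AddCommMonoid M] (f : ℕ → M)
    {s : Finset α} {a : α} (ha : a ∈ s) :
    ∑ C ∈ s.powerset with a ∈ C, f #C = ∑ m ∈ range #s, (#s - 1).choose m • f (m + 1) := by
  have h := sum_powerset_apply_card (fun m => f (m + 1)) (x := s.erase a)
  rw [card_erase_of_mem ha, Nat.sub_add_cancel (card_pos.2 ⟨a, ha⟩)] at h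
  rw [← h]
  refine sum_bij' (fun C _ => C.erase a) (fun D _ => insert a D) ?_ ?_ ?_ ?_ ?_
  · intro C hC
    simp only [mem_filter, mem_powerset] at hC ⊢
    exact erase_subset_erase _ hC.1
  · intro D hD
    simp only [mem_filter, mem_powerset] at hD ⊢
    exact ⟨insert_subset ha (hD.trans (erase_subset _ _)), mem_insert_self _ _⟩
  · intro C hC
    exact insert_erase (mem_filter.1 hC).2
  · intro D hD
    exact erase_insert fun h => notMem_erase a s (mem_powerset.1 hD h)
  · intro C hC
    rw [card_erase_add_one (mem_filter.1 hC).2]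

/-- The weight `n!` of a block of size `n`, truncated to sizes at most `j`. -/
def boundedFactorial (j n : ℕ) : ℤ := if n ≤ j then (n.factorial : ℤ) else 0

/-- The numbers with exponential generating function `log (1 + x + ⋯ + x ^ j)`. -/
def boundedCumulant (j n : ℕ) : ℤ :=
  ((n - 1).factorial : ℤ) * (1 - ((j : ℤ) + 1) * (if (j + 1) ∣ n then 1 else 0))

/-- Among `j + 1` consecutive integers exactly one is divisible by `j + 1`. -/
lemma sum_range_ite_dvd_sub {j n : ℕ} (h : j < n) :
    ∑ i ∈ range (j + 1), (if (j + 1) ∣ n - i then 1 else 0 : ℤ) = 1 := by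
  have key : ∀ i ∈ range (j + 1), ((j + 1) ∣ n - i ↔ n % (j + 1) = i) := by
    intro i hi
    have hi := mem_range.1 hi
    rw [← Nat.modEq_iff_dvd' (by omega), Nat.ModEq, Nat.mod_eq_of_lt hi, eq_comm]
  rw [sum_congr rfl fun i hi => if_congr (key i hi) rfl rfl, sum_ite_eq, if_pos]
  exact mem_range.2 (Nat.mod_lt _ (Nat.succ_pos _))

/-- The logarithmic-derivative recursion relating the two weights. -/
lemma sum_choose_mul_boundedCumulant (j n : ℕ) :
    ∑ m ∈ range (n + 1),
      (n.choose m : ℤ) * (boundedCumulant j (m + 1) * boundedFactorial j (n - m)) =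
      boundedFactorial j (n + 1) := by
  have hterm : ∀ i ∈ range (n + 1),
      (n.choose (n - i) : ℤ) *
        (boundedCumulant j (n - i + 1) * boundedFactorial j (n - (n - i))) =
      n.factorial * if i ≤ j then
        1 - ((j : ℤ) + 1) * (if (j + 1) ∣ n + 1 - i then 1 else 0) else 0 := by
    intro i hi
    have hi : i ≤ n := by simpa [Nat.lt_succ_iff] using hi
    have hc : (n.choose i : ℤ) * i.factorial * (n - i).factorial = n.factorial := by
      exact_mod_cast Nat.choose_mul_factorial_mul_factorial hi
    rw [Nat.choose_symm hi, Nat.sub_sub_self hi, boundedCumulant, boundedFactorial,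
      Nat.add_sub_cancel, ← Nat.sub_add_comm hi, ← hc]
    split_ifs <;> ring
  rw [← sum_range_reflect]
  simp only [Nat.add_sub_cancel]
  rw [sum_congr rfl hterm, ← mul_sum, boundedFactorial]
  split_ifs with h
  · rw [sum_congr rfl (g := fun _ => (1 : ℤ))]
    · simp [Nat.factorial_succ, mul_comm]
    · intro i hi
      have hi := mem_range.1 hi
      rw [if_pos (by omega), if_neg]
      · simp
      · exact fun hd => absurd (Nat.le_of_dvd (by omega) hd) (by omega)
  · rw [← sum_filter]
    have hf : (range (n + 1)).filter (· ≤ j) = range (j + 1) := by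
      ext i; simp only [mem_filter, mem_range]; omega
    rw [hf, sum_sub_distrib, ← mul_sum, sum_range_ite_dvd_sub (by omega)]
    simp

/-- The exponential formula below a fixed partition `π`, relative to a subset `t`. -/
lemma sum_prod_boundedCumulant_of_subset {α : Type*} [DecidableEq α] (j : ℕ) {s : Finset α}
    (π : Finpartition s) (t : Finset α) (ht : t ⊆ s) :
    ∑ P : Finpartition t, ∏ C ∈ P.parts,
      (if ∃ B ∈ π.parts, C ⊆ B then boundedCumulant j #C else 0) =
      ∏ B ∈ π.parts, boundedFactorial j #(t ∩ B) := by
  induction t using Finset.strongInduction with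
  | H t ih =>
    obtain rfl | ⟨a, ha⟩ := t.eq_empty_or_nonempty
    · have hparts (P : Finpartition (∅ : Finset α)) : P.parts = ∅ := P.parts_eq_empty_iff.2 rfl
      have : Unique (Finpartition (∅ : Finset α)) :=
        inferInstanceAs (Unique (Finpartition (⊥ : Finset α)))
      simp [hparts, boundedFactorial]
    · have hB₀ : π.part a ∈ π.parts := π.part_mem.2 (ht ha)
      have haB₀ : a ∈ π.part a := π.mem_part (ht ha)
      set B₀ := π.part a with hB₀_def
      have haU : a ∈ t ∩ B₀ := mem_inter.2 ⟨ha, haB₀⟩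
      have hterm : ∀ C ∈ t.powerset.filter (a ∈ ·),
          (if ∃ B ∈ π.parts, C ⊆ B then boundedCumulant j #C else 0) *
            ∑ Q : Finpartition (t \ C), ∏ D ∈ Q.parts,
              (if ∃ B ∈ π.parts, D ⊆ B then boundedCumulant j #D else 0) =
          if C ⊆ B₀ then boundedCumulant j #C * boundedFactorial j (#(t ∩ B₀) - #C) *
            ∏ B ∈ π.parts.erase B₀, boundedFactorial j #(t ∩ B) else 0 := by
        intro C hC
        obtain ⟨hCt, haC⟩ : C ⊆ t ∧ a ∈ C := by simpa using hC
        have hiff : (∃ B ∈ π.parts, C ⊆ B) ↔ C ⊆ B₀ := by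
          refine ⟨fun ⟨B, hB, hCB⟩ => ?_, fun h => ⟨B₀, hB₀, h⟩⟩
          rwa [hB₀_def, π.part_eq_of_mem hB (hCB haC)]
        rw [if_congr hiff rfl rfl]
        split_ifs with hCB
        · rw [ih _ (sdiff_ssubset hCt ⟨a, haC⟩) (sdiff_subset.trans ht),
            ← mul_prod_erase _ _ hB₀, mul_assoc]
          congr 2
          · rw [sdiff_inter_right_comm, card_sdiff_of_subset (subset_inter hCt hCB)]
          · refine prod_congr rfl fun B hB => ?_
            obtain ⟨hne, hB⟩ := mem_erase.1 hB
            have hd : Disjoint B C := (π.disjoint hB hB₀ hne).mono_right hCB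
            rw [sdiff_inter_right_comm, sdiff_eq_self_of_disjoint]
            exact hd.mono_left inter_subset_right
        · simp
      rw [Finpartition.sum_prod_parts_eq_sum_part _ ha, sum_congr rfl hterm, ← sum_filter,
        filter_filter]
      have hset : (t.powerset.filter fun C => a ∈ C ∧ C ⊆ B₀) =
          (t ∩ B₀).powerset.filter (a ∈ ·) := by
        ext C; simp only [mem_filter, mem_powerset, subset_inter_iff]; tauto
      rw [hset, ← sum_mul, ← mul_prod_erase _ _ hB₀, sum_powerset_mem_apply_card
        (fun m => boundedCumulant j m * boundedFactorial j (#(t ∩ B₀) - m)) haU]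
      congr 1
      obtain ⟨n, hn⟩ := Nat.exists_eq_succ_of_ne_zero (card_ne_zero_of_mem haU)
      rw [hn]
      simp only [Nat.succ_eq_add_one, Nat.add_sub_cancel, Nat.add_sub_add_right, nsmul_eq_mul]
      exact sum_choose_mul_boundedCumulant j n

/-- The exponential formula on the principal ideal of partitions refining `π`. -/
lemma sum_le_prod_boundedCumulant {α : Type*} [DecidableEq α] (j : ℕ) {s : Finset α}
    (π : Finpartition s) :
    ∑ σ : Finpartition s, (if σ ≤ π then ∏ C ∈ σ.parts, boundedCumulant j #C else 0) =
      ∏ B ∈ π.parts, boundedFactorial j #B := by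
  have h := sum_prod_boundedCumulant_of_subset j π s Subset.rfl
  simp only [prod_ite_zero] at h
  rw [prod_congr rfl fun B hB => by rw [inter_eq_right.2 (π.le hB)]] at h
  rw [← h]
  exact sum_congr rfl fun σ _ => if_congr Iff.rfl rfl rfl

/-- A function satisfying the defining recursion of the Möbius function in its second argument
also satisfies the dual recursion in its first argument. -/
lemma sum_mobius_left {P R : Type*} [PartialOrder P] [Fintype P] [CommRing R] (μ : P → P → R)
    (hμ₁ : ∀ x, μ x x = 1)
    (hμ₂ : ∀ x y, x < y → ∑ z ∈ univ.filter (fun z => x ≤ z ∧ z ≤ y), μ x z = 0) (x y : P) :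
    ∑ z ∈ univ.filter (fun z => x ≤ z ∧ z ≤ y), μ z y = if x = y then 1 else 0 := by
  let M : Matrix P P R := fun x y => if x ≤ y then μ x y else 0
  let Z : Matrix P P R := fun x y => if x ≤ y then 1 else 0
  have hMZ : M * Z = 1 := by
    ext x y
    rw [Matrix.mul_apply, Matrix.one_apply]
    simp only [M, Z, mul_ite, mul_one, mul_zero, ← ite_and]
    rw [← sum_filter]
    simp only [and_comm (b := x ≤ _)]
    split_ifs with h
    · subst h
      rw [sum_eq_single x] <;> simp +contextual [hμ₁]
      exact fun b hb hb' hne => absurd (le_antisymm hb' hb) hne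
    · by_cases hle : x ≤ y
      · exact hμ₂ x y (lt_of_le_of_ne hle h)
      · rw [filter_false_of_mem, sum_empty]
        exact fun z _ hz => hle (hz.1.trans hz.2)
  have hZM : (Z * M) x y = (1 : Matrix P P R) x y := by rw [mul_eq_one_comm.1 hMZ]
  rw [Matrix.mul_apply, Matrix.one_apply] at hZM
  simpa only [M, Z, ite_mul, one_mul, zero_mul, ← ite_and, ← sum_filter] using hZM

/-- **Möbius-function identity for partitions with blocks of bounded size.**  In the
lattice `Π_k` of set partitions of `{1,…,k}` ordered by refinement, if `μ` satisfies the
defining recursion of the Möbius function (`μ(x,x) = 1` and `Σ_{x ≤ z ≤ y} μ(x,z) = 0`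
for `x < y`), then `Σ_π (∏_{B block of π} |B|!)·μ(π,1̂) = (k−1)!·(1−(j+1)·[(j+1) ∣ k])`,
the sum being over partitions `π` all of whose blocks have size at most `j`. -/
theorem mobius_identity_bounded_blocks (j k : ℕ) (hj : 0 < j) (hk : 0 < k)
    (μ : Finpartition (Finset.univ : Finset (Fin k)) →
         Finpartition (Finset.univ : Finset (Fin k)) → ℤ)
    (hμ₁ : ∀ x, μ x x = 1)
    (hμ₂ : ∀ x y, x < y → ∑ z ∈ Finset.univ.filter (fun z => x ≤ z ∧ z ≤ y), μ x z = 0) :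
    ∑ π ∈ Finset.univ.filter
        (fun π : Finpartition (Finset.univ : Finset (Fin k)) =>
          ∀ B ∈ π.parts, B.card ≤ j),
      (∏ B ∈ π.parts, (B.card.factorial : ℤ)) * μ π ⊤ =
      ((k - 1).factorial : ℤ) * (1 - ((j : ℤ) + 1) * (if (j + 1) ∣ k then 1 else 0)) := by
  have hstep : ∀ π : Finpartition (univ : Finset (Fin k)),
      (if ∀ B ∈ π.parts, #B ≤ j then (∏ B ∈ π.parts, (B.card.factorial : ℤ)) * μ π ⊤ else 0) =
      ∑ σ : Finpartition (univ : Finset (Fin k)),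
        (∏ C ∈ σ.parts, boundedCumulant j #C) * if σ ≤ π then μ π ⊤ else 0 := by
    intro π
    have h := sum_le_prod_boundedCumulant j π
    simp only [boundedFactorial, prod_ite_zero] at h
    rw [← ite_zero_mul]
    trans (∑ σ : Finpartition (univ : Finset (Fin k)),
      if σ ≤ π then ∏ C ∈ σ.parts, boundedCumulant j #C else 0) * μ π ⊤
    · congr 1
      convert h.symm
    · rw [sum_mul]
      refine sum_congr rfl fun σ _ => ?_
      split_ifs <;> simp
  have hleft : ∀ σ : Finpartition (univ : Finset (Fin k)),
      ∑ π : Finpartition (univ : Finset (Fin k)), (if σ ≤ π then μ π ⊤ else 0) =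
        if σ = ⊤ then 1 else 0 := by
    intro σ
    have h := sum_mobius_left μ hμ₁ hμ₂ σ ⊤
    simp only [le_top, and_true, sum_filter] at h
    convert h
  have hne : (univ : Finset (Fin k)) ≠ ⊥ := by
    have : NeZero k := ⟨hk.ne'⟩
    exact univ_nonempty.ne_empty
  have htop : (⊤ : Finpartition (univ : Finset (Fin k))).parts = {univ} :=
    (subset_singleton_iff.1 (Finpartition.parts_top_subset _)).resolve_left
      fun h => hne (Finpartition.parts_eq_empty_iff.1 h)
  rw [sum_filter, sum_congr rfl fun π _ => hstep π, sum_comm]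
  simp only [← mul_sum, hleft]
  simp [htop, boundedCumulant]
end

section
/- Let k and d be positive integers with 1 ≤ d ≤ k. Then Σ_{π} (∏_{B a block of π} |B|!)·μ(π, 1̂) = (k−1)!·(−1)^{d−1}·binom(k,d), where the sum is over all set partitions π of {1,…,k} having exactly d blocks. -/
open scoped Classical

open Finset

namespace Finpartition

variable {α : Type*} [Fintype α] [DecidableEq α]

/-- The partition of a finite type into the nonempty fibres of a function. -/
noncomputable def ofFibers {β : Type*} (f : α → β) : Finpartition (univ : Finset α) :=
  ofSetoid (Setoid.ker f)

theorem ofFibers_part_eq_iff {β : Type*} (f : α → β) (a b : α) :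
    (ofFibers f).part a = (ofFibers f).part b ↔ f a = f b := by
  rw [← mem_part_iff_part_eq_part _ (mem_univ a) (mem_univ b), ofFibers,
    mem_part_ofSetoid_iff_rel, Setoid.ker_def]
  exact eq_comm

theorem le_iff_part_eq_imp (P Q : Finpartition (univ : Finset α)) :
    P ≤ Q ↔ ∀ a b, P.part a = P.part b → Q.part a = Q.part b := by
  constructor
  · intro h a b hab
    obtain ⟨C, hC, hPC⟩ := h ((P.part_mem).2 (mem_univ a))
    rw [Q.part_eq_of_mem hC (hPC ((P.mem_part_self).2 (mem_univ a))),
      Q.part_eq_of_mem hC (hPC (hab ▸ (P.mem_part_self).2 (mem_univ b)))]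
  · intro h B hB
    obtain ⟨a, ha⟩ := P.nonempty_of_mem_parts hB
    refine ⟨Q.part a, (Q.part_mem).2 (mem_univ a), fun b hb => ?_⟩
    rw [Q.mem_part_iff_part_eq_part (mem_univ _) (mem_univ _)]
    exact h _ _ ((P.part_eq_of_mem hB hb).trans (P.part_eq_of_mem hB ha).symm)

/-- The quotient map from a type to the set of blocks of a partition. -/
def toPart (P : Finpartition (univ : Finset α)) (a : α) : P.parts :=
  ⟨P.part a, (P.part_mem).2 (mem_univ a)⟩

theorem toPart_surjective (P : Finpartition (univ : Finset α)) :
    Function.Surjective P.toPart := by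
  rintro ⟨B, hB⟩
  obtain ⟨a, ha⟩ := P.nonempty_of_mem_parts hB
  exact ⟨a, Subtype.ext (P.part_eq_of_mem hB ha)⟩

theorem toPart_eq_iff (P : Finpartition (univ : Finset α)) (a b : α) :
    P.toPart a = P.toPart b ↔ P.part a = P.part b := Subtype.ext_iff

theorem exists_eq_comp_toPart {β : Type*} {P : Finpartition (univ : Finset α)} {f : α → β}
    (h : P ≤ ofFibers f) : ∃ g : P.parts → β, g ∘ P.toPart = f := by
  rw [le_iff_part_eq_imp] at h
  refine ⟨fun B => f (Function.surjInv P.toPart_surjective B), funext fun a => ?_⟩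
  rw [Function.comp_apply, ← ofFibers_part_eq_iff]
  exact h _ _ ((P.toPart_eq_iff _ _).1 (Function.surjInv_eq P.toPart_surjective _))

theorem le_ofFibers_comp_toPart {β : Type*} (P : Finpartition (univ : Finset α))
    (g : P.parts → β) : P ≤ ofFibers (g ∘ P.toPart) := by
  rw [le_iff_part_eq_imp]
  intro a b h
  rw [ofFibers_part_eq_iff]
  exact congrArg g ((P.toPart_eq_iff _ _).2 h)

theorem ofFibers_comp_toPart_eq_iff {β : Type*} (P : Finpartition (univ : Finset α))
    (g : P.parts → β) : ofFibers (g ∘ P.toPart) = P ↔ Function.Injective g := by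
  constructor
  · intro h B C hBC
    obtain ⟨a, rfl⟩ := P.toPart_surjective B
    obtain ⟨b, rfl⟩ := P.toPart_surjective C
    rw [toPart_eq_iff]
    have := (ofFibers_part_eq_iff (g ∘ P.toPart) a b).2 hBC
    rwa [h] at this
  · intro h
    refine le_antisymm ?_ (P.le_ofFibers_comp_toPart g)
    rw [le_iff_part_eq_imp]
    intro a b hab
    rw [ofFibers_part_eq_iff] at hab
    exact (P.toPart_eq_iff _ _).1 (h hab)

theorem card_filter_le_ofFibers (P : Finpartition (univ : Finset α)) (n : ℕ) :
    #{f : α → Fin n | P ≤ ofFibers f} = n ^ #P.parts := by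
  have h : #(univ : Finset (P.parts → Fin n)) = #{f : α → Fin n | P ≤ ofFibers f} := by
    refine card_bij (fun g _ => g ∘ P.toPart) (fun g _ => ?_) (fun g _ g' _ h => ?_)
      (fun f hf => ?_)
    · simpa using P.le_ofFibers_comp_toPart g
    · exact P.toPart_surjective.injective_comp_right h
    · obtain ⟨g, hg⟩ := exists_eq_comp_toPart (mem_filter.1 hf).2
      exact ⟨g, mem_univ _, hg⟩
  rw [← h, card_univ, Fintype.card_fun, Fintype.card_fin, Fintype.card_coe]

theorem card_filter_ofFibers_eq (P : Finpartition (univ : Finset α)) (n : ℕ) :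
    #{f : α → Fin n | ofFibers f = P} = n.descFactorial #P.parts := by
  have h : #(univ : Finset (P.parts ↪ Fin n)) = #{f : α → Fin n | ofFibers f = P} := by
    refine card_bij (fun g _ => g ∘ P.toPart) (fun g _ => ?_) (fun g _ g' _ h => ?_)
      (fun f hf => ?_)
    · simpa using (P.ofFibers_comp_toPart_eq_iff g).2 g.injective
    · exact DFunLike.coe_injective (P.toPart_surjective.injective_comp_right h)
    · have hf := (mem_filter.1 hf).2
      obtain ⟨g, rfl⟩ := exists_eq_comp_toPart hf.ge
      exact ⟨⟨g, (P.ofFibers_comp_toPart_eq_iff g).1 hf⟩, mem_univ _, rfl⟩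
  rw [← h, card_univ, Fintype.card_embedding_eq, Fintype.card_fin, Fintype.card_coe]

theorem sum_ofFibers (n : ℕ) (F : Finpartition (univ : Finset α) → ℤ) :
    ∑ f : α → Fin n, F (ofFibers f) = ∑ P, (n.descFactorial #P.parts : ℤ) * F P := by
  rw [← sum_fiberwise univ (ofFibers : (α → Fin n) → _)]
  refine sum_congr rfl fun P _ => ?_
  rw [← card_filter_ofFibers_eq, ← nsmul_eq_mul, ← sum_const]
  exact sum_congr rfl fun f hf => by rw [(mem_filter.1 hf).2]

theorem sum_descFactorial_of_le (P : Finpartition (univ : Finset α)) (n : ℕ) :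
    ∑ Q with P ≤ Q, (n.descFactorial #Q.parts : ℤ) = (n : ℤ) ^ #P.parts := by
  have h := sum_ofFibers n fun Q => if P ≤ Q then (1 : ℤ) else 0
  simp only [mul_ite, mul_one, mul_zero, ← sum_filter, sum_const, nsmul_eq_mul] at h
  rw [← h, card_filter_le_ofFibers]
  simp

theorem prod_parts_ofFibers {n : ℕ} (f : α → Fin n) :
    ∏ B ∈ (ofFibers f).parts, ((#B).factorial : ℤ) =
      ∏ i, ((#{a | f a = i}).factorial : ℤ) := by
  have hpart (a : α) : (ofFibers f).part a = ({b | f b = f a} : Finset α) := by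
    ext b
    rw [mem_part_iff_part_eq_part _ (mem_univ _) (mem_univ _), ofFibers_part_eq_iff]
    simp
  rw [← prod_subset (subset_univ (univ.image f))]
  · symm
    refine prod_bij (fun i _ => ({b | f b = i} : Finset α)) ?_ ?_ ?_ (fun _ _ => rfl)
    · intro i hi
      obtain ⟨a, -, rfl⟩ := mem_image.1 hi
      rw [← hpart]
      exact part_mem _ |>.2 (mem_univ a)
    · intro i hi j _ hij
      obtain ⟨a, -, rfl⟩ := mem_image.1 hi
      have : a ∈ ({b | f b = j} : Finset α) := hij ▸ by simp
      simpa using this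
    · intro B hB
      obtain ⟨a, ha⟩ := nonempty_of_mem_parts _ hB
      exact ⟨f a, mem_image_of_mem _ (mem_univ a),
        (hpart a).symm.trans (part_eq_of_mem _ hB ha)⟩
  · intro i _ hi
    have : ({a | f a = i} : Finset α) = ∅ := by
      ext a
      simpa using fun h : f a = i => hi (h ▸ mem_image_of_mem _ (mem_univ a))
    simp [this]

theorem eq_top_iff_card_parts_eq_one [Nonempty α] (P : Finpartition (univ : Finset α)) :
    P = ⊤ ↔ #P.parts = 1 := by
  constructor
  · rintro rfl
    refine le_antisymm ?_ (card_pos.2 (parts_nonempty _ univ_nonempty.ne_empty))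
    simpa using card_le_card (parts_top_subset (univ : Finset α))
  · intro h
    rw [eq_top_iff, le_iff_part_eq_imp]
    intro a b _
    exact card_le_one.1 h.le _ (part_mem _ |>.2 (mem_univ a)) _ (part_mem _ |>.2 (mem_univ b))

theorem sum_mobius_mul_pow
    (μ : Finpartition (univ : Finset α) → Finpartition (univ : Finset α) → ℤ)
    (hμ₁ : ∀ x, μ x x = 1) (hμ₂ : ∀ x y, x < y → ∑ z with x ≤ z ∧ z ≤ y, μ x z = 0)
    (x : Finpartition (univ : Finset α)) (n : ℕ) :
    ∑ z with x ≤ z, μ x z * (n : ℤ) ^ #z.parts = n.descFactorial #x.parts := by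
  simp only [← sum_descFactorial_of_le, mul_sum]
  rw [sum_comm' (t' := ({w | x ≤ w} : Finset (Finpartition (univ : Finset α))))
    (s' := fun w => {z | x ≤ z ∧ z ≤ w})]
  · rw [sum_eq_single x]
    · have : ({z | x ≤ z ∧ z ≤ x} : Finset (Finpartition (univ : Finset α))) = {x} := by
        ext z
        simpa using ⟨fun h => le_antisymm h.2 h.1, fun h => h ▸ ⟨le_rfl, le_rfl⟩⟩
      simp [this, hμ₁]
    · intro w hw hwx
      rw [← sum_mul, hμ₂ x w (lt_of_le_of_ne (mem_filter.1 hw).2 hwx.symm), zero_mul]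
    · simp
  · intro z w
    simp only [mem_filter, mem_univ, true_and]
    exact ⟨fun h => ⟨h, h.1.trans h.2⟩, fun h => h.1⟩

end Finpartition

theorem descPochhammer_eval_neg_one (d : ℕ) :
    (descPochhammer ℤ d).eval (-1) = (-1) ^ d * (d.factorial : ℤ) := by
  induction d with
  | zero => simp
  | succ d ih =>
    rw [descPochhammer_succ_eval, ih, Nat.factorial_succ]
    push_cast
    ring

theorem descPochhammer_succ_coeff_one (d : ℕ) :
    (descPochhammer ℤ (d + 1)).coeff 1 = (-1) ^ d * (d.factorial : ℤ) := by
  rw [descPochhammer_succ_left, Polynomial.coeff_X_mul, Polynomial.coeff_zero_eq_eval_zero,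
    Polynomial.eval_comp]
  simp [descPochhammer_eval_neg_one]

theorem Finpartition.mobius_top {α : Type*} [Fintype α] [DecidableEq α] [Nonempty α]
    (μ : Finpartition (univ : Finset α) → Finpartition (univ : Finset α) → ℤ)
    (hμ₁ : ∀ x, μ x x = 1) (hμ₂ : ∀ x y, x < y → ∑ z with x ≤ z ∧ z ≤ y, μ x z = 0)
    (x : Finpartition (univ : Finset α)) :
    μ x ⊤ = (-1) ^ (#x.parts - 1) * ((#x.parts - 1).factorial : ℤ) := by
  have hpoly : ∑ z with x ≤ z, Polynomial.C (μ x z) * Polynomial.X ^ #z.parts =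
      descPochhammer ℤ #x.parts := by
    refine Polynomial.eq_of_infinite_eval_eq _ _
      ((Set.infinite_range_of_injective (Nat.cast_injective (R := ℤ))).mono ?_)
    rintro _ ⟨n, rfl⟩
    rw [Set.mem_ofPred_eq, descPochhammer_eval_eq_descFactorial,
      ← sum_mobius_mul_pow μ hμ₁ hμ₂, Polynomial.eval_finsetSum]
    simp
  obtain ⟨d, hd⟩ : ∃ d, #x.parts = d + 1 :=
    Nat.exists_eq_succ_of_ne_zero
      (card_pos.2 (x.parts_nonempty univ_nonempty.ne_empty)).ne'
  have hcoeff := congrArg (Polynomial.coeff · 1) hpoly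
  simp only [hd, descPochhammer_succ_coeff_one, Polynomial.finsetSum_coeff,
    Polynomial.coeff_C_mul_X_pow, @eq_comm _ 1, ← eq_top_iff_card_parts_eq_one] at hcoeff
  simpa [hd] using hcoeff

theorem sum_prod_factorial_card_fiber (k n : ℕ) :
    ∑ f : Fin k → Fin n, ∏ i, ((#{a | f a = i}).factorial : ℤ) = n.ascFactorial k := by
  induction k with
  | zero => simp
  | succ k ih =>
    rw [← (Fin.consEquiv fun _ : Fin (k + 1) => Fin n).sum_comp, Fintype.sum_prod_type_right,
      Nat.ascFactorial_succ, Nat.cast_mul, ← ih, mul_sum]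
    refine sum_congr rfl fun g _ => ?_
    have hstep (j : Fin n) :
        ∏ i, ((#{a | Fin.cons (α := fun _ => Fin n) j g a = i}).factorial : ℤ) =
          ((#{a | g a = j} : ℤ) + 1) * ∏ i, ((#{a | g a = i}).factorial : ℤ) := by
      rw [← mul_prod_erase univ _ (mem_univ j), ← mul_prod_erase univ _ (mem_univ j), ← mul_assoc]
      congr 1
      · rw [Fin.card_filter_univ_succ]
        simp [Nat.factorial_succ]
      · refine prod_congr rfl fun i hi => ?_
        rw [Fin.card_filter_univ_succ]
        simp [(ne_of_mem_erase hi).symm]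
    have hcard : ∑ j, (#{a | g a = j} : ℤ) = k := by
      rw [← Nat.cast_sum, ← card_eq_sum_card_fiberwise (fun _ _ => mem_univ _)]
      simp
    calc _ = ∑ j, ((#{a | g a = j} : ℤ) + 1) * ∏ i, ((#{a | g a = i}).factorial : ℤ) :=
          sum_congr rfl fun j _ => hstep j
      _ = _ := by
          rw [← sum_mul, sum_add_distrib, hcard]
          simp [add_comm]

theorem eq_of_forall_sum_mul_choose_eq {a b : ℕ → ℤ} {k : ℕ}
    (h : ∀ n : ℕ, ∑ d ∈ range (k + 1), a d * n.choose d = ∑ d ∈ range (k + 1), b d * n.choose d)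
    {d : ℕ} (hd : d ≤ k) : a d = b d := by
  induction d using Nat.strong_induction_on with
  | _ d ih =>
    have hsplit (c : ℕ → ℤ) : ∑ e ∈ range (k + 1), c e * d.choose e =
        ∑ e ∈ range d, c e * d.choose e + c d := by
      rw [← sum_subset (range_subset_range.2 (Nat.succ_le_succ hd)), sum_range_succ]
      · simp
      · intro e _ he
        rw [Nat.choose_eq_zero_of_lt (by simpa using he)]
        simp
    have hd' := h d
    rw [hsplit, hsplit, sum_congr rfl fun e he => by
      rw [ih e (mem_range.1 he) ((mem_range.1 he).le.trans hd)]] at hd'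
    exact add_left_cancel hd'

theorem ascFactorial_eq_sum_choose (n k : ℕ) :
    n.ascFactorial (k + 1) =
      ∑ d ∈ range (k + 2), (k + 1).factorial * k.choose (k + 1 - d) * n.choose d := by
  rw [Nat.ascFactorial_eq_factorial_mul_choose', show n + (k + 1) - 1 = n + k by omega,
    Nat.add_choose_eq, Finset.Nat.sum_antidiagonal_eq_sum_range_succ_mk, mul_sum]
  exact sum_congr rfl fun d _ => by ring

theorem factorial_mul_sum_prod_factorial {k d : ℕ} (hdk : d ≤ k + 1) :
    (d.factorial : ℤ) * ∑ π : Finpartition (univ : Finset (Fin (k + 1))) with #π.parts = d,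
      ∏ B ∈ π.parts, ((#B).factorial : ℤ) = (k + 1).factorial * k.choose (k + 1 - d) := by
  refine eq_of_forall_sum_mul_choose_eq (k := k + 1)
    (a := fun d => (d.factorial : ℤ) *
      ∑ π : Finpartition (univ : Finset (Fin (k + 1))) with #π.parts = d,
        ∏ B ∈ π.parts, ((#B).factorial : ℤ))
    (b := fun d => (k + 1).factorial * k.choose (k + 1 - d)) (fun n => ?_) hdk
  have hasc := ascFactorial_eq_sum_choose n k
  apply_fun ((↑) : ℕ → ℤ) at hasc
  push_cast at hasc
  rw [← hasc, ← sum_prod_factorial_card_fiber]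
  simp only [← Finpartition.prod_parts_ofFibers]
  rw [Finpartition.sum_ofFibers n fun P => ∏ B ∈ P.parts, ((#B).factorial : ℤ),
    ← sum_fiberwise_of_maps_to (t := range (k + 2))
      (s := (univ : Finset (Finpartition (univ : Finset (Fin (k + 1))))))
      (g := fun P => #P.parts) fun P _ =>
        mem_range.2 (Nat.lt_succ_of_le (P.card_parts_le_card.trans (by simp)))]
  refine sum_congr rfl fun d _ => ?_
  rw [mul_right_comm, mul_sum]
  refine sum_congr rfl fun P hP => ?_
  rw [(mem_filter.1 hP).2, Nat.descFactorial_eq_factorial_mul_choose]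
  push_cast
  ring

/-- **Möbius-function identity for partitions with a fixed number of blocks.**  In the
lattice `Π_k` of set partitions of `{1,…,k}` ordered by refinement, if `μ` satisfies the
defining recursion of the Möbius function (`μ(x,x) = 1` and `Σ_{x ≤ z ≤ y} μ(x,z) = 0`
for `x < y`), then `Σ_π (∏_{B block of π} |B|!)·μ(π,1̂) = (k−1)!·(−1)^{d−1}·C(k,d)`,
the sum being over partitions `π` having exactly `d` blocks, for `1 ≤ d ≤ k`. -/
theorem mobius_identity_fixed_blocks (k d : ℕ) (hd : 1 ≤ d) (hdk : d ≤ k)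
    (μ : Finpartition (Finset.univ : Finset (Fin k)) →
         Finpartition (Finset.univ : Finset (Fin k)) → ℤ)
    (hμ₁ : ∀ x, μ x x = 1)
    (hμ₂ : ∀ x y, x < y → ∑ z ∈ Finset.univ.filter (fun z => x ≤ z ∧ z ≤ y), μ x z = 0) :
    ∑ π ∈ Finset.univ.filter
        (fun π : Finpartition (Finset.univ : Finset (Fin k)) => π.parts.card = d),
      (∏ B ∈ π.parts, (B.card.factorial : ℤ)) * μ π ⊤ =
      ((k - 1).factorial : ℤ) * (-1 : ℤ) ^ (d - 1) * (k.choose d : ℤ) := by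
  obtain ⟨e, rfl⟩ := Nat.exists_eq_succ_of_ne_zero (Nat.one_le_iff_ne_zero.1 hd)
  obtain ⟨m, rfl⟩ := Nat.exists_eq_succ_of_ne_zero (Nat.one_le_iff_ne_zero.1 (hd.trans hdk))
  have hμ (π : Finpartition (univ : Finset (Fin (m + 1)))) (hπ : #π.parts = e + 1) :
      μ π ⊤ = (-1) ^ e * (e.factorial : ℤ) := by
    have h := Finpartition.mobius_top μ hμ₁ (by simpa using hμ₂) π
    rwa [hπ] at h
  have hlah := factorial_mul_sum_prod_factorial hdk
  simp only [Nat.succ_eq_add_one, Nat.add_sub_cancel] at *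
  rw [sum_congr rfl fun π hπ => by rw [hμ π (mem_filter.1 hπ).2], ← sum_mul]
  have hchoose : m.choose (m + 1 - (e + 1)) = m.choose e := by
    rw [Nat.add_sub_add_right, Nat.choose_symm (Nat.le_of_succ_le_succ hdk)]
  have habs : ((m : ℤ) + 1) * m.choose e = (m + 1).choose (e + 1) * (e + 1) := by
    exact_mod_cast Nat.add_one_mul_choose_eq m e
  rw [hchoose, Nat.factorial_succ, Nat.factorial_succ] at hlah
  push_cast at hlah
  refine mul_left_cancel₀ (show ((e : ℤ) + 1) ≠ 0 by positivity) ?_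
  linear_combination (-1) ^ e * hlah + (-1) ^ e * (m.factorial : ℤ) * habs
end

section
/- Let p be a prime, q = p^a a prime power, F_q the finite field with q elements, b ∈ F_q, and k a non-negative integer. If k ≢ 0 (mod p) and k ≢ 1 (mod p), then q·P_k(b) = binom(q+k−2, k). -/
/-- Translating every element of a multiset of size `k` by `c` shifts its sum by `k • c`. -/
lemma Sym.sum_map_add_const {M : Type*} [AddCommMonoid M] {k : ℕ} (m : Sym M k) (c : M) :
    ((m.map (· + c) : Sym M k) : Multiset M).sum = (m : Multiset M).sum + k • c := by
  rw [Sym.coe_map, Multiset.sum_map_add]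
  simp

/-- If `k` is nonzero in `F`, the sums of the multisets of size `k` are equidistributed. -/
lemma card_filter_sym_sum_eq {F : Type*} [Field F] [Fintype F] [DecidableEq F] {k : ℕ}
    (hk : (k : F) ≠ 0) (b b' : F) :
    (Finset.univ.filter fun m : Sym F k => (m : Multiset F).sum = b).card =
      (Finset.univ.filter fun m : Sym F k => (m : Multiset F).sum = b').card := by
  refine Finset.card_equiv (Sym.equivCongr (Equiv.addRight ((b' - b) / k))) fun m => ?_
  have h := Sym.sum_map_add_const m ((b' - b) / k)
  rw [nsmul_eq_mul, mul_div_cancel₀ _ hk] at h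
  simp only [Finset.mem_filter, Finset.mem_univ, true_and]
  change _ ↔ ((m.map (· + (b' - b) / k) : Sym F k) : Multiset F).sum = b'
  rw [h]
  constructor
  · rintro rfl
    ring
  · intro h
    linear_combination h

/-- If `k` is nonzero in `F`, each element is the sum of the same share of multisets of size `k`. -/
lemma card_mul_card_filter_sym_sum {F : Type*} [Field F] [Fintype F] [DecidableEq F] {k : ℕ}
    (hk : (k : F) ≠ 0) (b : F) :
    Fintype.card F * (Finset.univ.filter fun m : Sym F k => (m : Multiset F).sum = b).card =
      (Fintype.card F + k - 1).choose k := by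
  rw [← Sym.card_sym_eq_choose, ← Finset.card_univ (α := Sym F k),
    Finset.card_eq_sum_card_fiberwise (s := Finset.univ) (f := fun m : Sym F k => (m : Multiset F).sum)
      (t := Finset.univ) (fun _ _ => Finset.mem_univ _),
    Finset.sum_congr rfl fun b' _ => card_filter_sym_sum_eq hk b' b]
  simp

/-- Removing one zero identifies the multisets of size `k + 1` containing zero with the multisets
of size `k` with the same sum. -/
lemma card_filter_sym_succ_sum {M : Type*} [AddCommMonoid M] [Fintype M] [DecidableEq M]
    (k : ℕ) (b : M) :
    (Finset.univ.filter fun m : Sym M (k + 1) => (m : Multiset M).sum = b).card =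
      (Finset.univ.filter fun m : Sym M (k + 1) =>
        (0 : M) ∉ (m : Multiset M) ∧ (m : Multiset M).sum = b).card +
      (Finset.univ.filter fun m : Sym M k => (m : Multiset M).sum = b).card := by
  rw [← Finset.card_filter_add_card_filter_not
      (fun m : Sym M (k + 1) => (0 : M) ∉ (m : Multiset M)),
    Finset.filter_filter, Finset.filter_filter]
  congr 1
  · simp only [and_comm]
  · symm
    refine Finset.card_bij (fun m _ => (0 : M) ::ₛ m) ?_ ?_ ?_
    · intro m hm
      simpa [Sym.coe_cons] using hm
    · intro m _ m' _ h
      exact Sym.cons_inj_right 0 m m' |>.1 h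
    · intro m hm
      simp only [Finset.mem_filter, Finset.mem_univ, true_and, not_not] at hm
      obtain ⟨m', rfl⟩ := Sym.exists_cons_of_mem (Sym.mem_coe.1 hm.2)
      exact ⟨m', by simpa [Sym.coe_cons] using hm.1, rfl⟩


/-- **Partitions over finite fields, generic case.**  For `q = p^a` and `b ∈ F_q`,
if `k ≢ 0 (mod p)` and `k ≢ 1 (mod p)`, then `q·P_k(b) = C(q+k−2, k)`, where `P_k(b)` is
the number of multisets of `k` nonzero elements of `F_q` with sum `b`. -/
theorem partitions_finite_field_generic (p a : ℕ) (hp : p.Prime) (ha : 0 < a)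
    (F : Type*) [Field F] [Fintype F] [DecidableEq F] (hF : Fintype.card F = p ^ a)
    (b : F) (k : ℕ) (h0 : ¬ k ≡ 0 [MOD p]) (h1 : ¬ k ≡ 1 [MOD p]) :
    p ^ a * (Finset.univ.filter fun m : Sym F k =>
        (0 : F) ∉ (m : Multiset F) ∧ (m : Multiset F).sum = b).card =
      (p ^ a + k - 2).choose k := by
  have : Fact p.Prime := ⟨hp⟩
  have : CharP F p := charP_of_card_eq_prime_pow hF
  obtain _ | j := k
  · exact absurd rfl h0
  have hk : ((j + 1 : ℕ) : F) ≠ 0 := fun h =>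
    h0 ((Nat.modEq_zero_iff_dvd).2 ((CharP.cast_eq_zero_iff F p _).1 h))
  have hj : (j : F) ≠ 0 := fun h =>
    h1 (((Nat.modEq_zero_iff_dvd).2 ((CharP.cast_eq_zero_iff F p _).1 h)).add_right 1)
  have hsucc := card_mul_card_filter_sym_sum hk b
  rw [card_filter_sym_succ_sum, mul_add, card_mul_card_filter_sym_sum hj, hF] at hsucc
  have hq : 2 ≤ p ^ a := hp.two_le.trans (Nat.le_self_pow ha.ne' p)
  obtain ⟨n, hn⟩ := Nat.exists_eq_add_of_le' hq
  rw [hn] at hsucc ⊢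
  rw [show n + 2 + (j + 1) - 1 = n + j + 1 + 1 by omega, show n + 2 + j - 1 = n + j + 1 by omega,
    Nat.choose_succ_succ] at hsucc
  rw [show n + 2 + (j + 1) - 2 = n + j + 1 by omega]
  exact Nat.add_left_cancel ((add_comm _ _).trans hsucc)
end

section
/- Let p be a prime, q = p^a a prime power, F_q the finite field with q elements, b ∈ F_q, and k a positive integer with p ∣ k. Then q·P_k(b) = binom(q+k−2, k) + v(b)·binom(q/p + k/p − 1, k/p). -/
open PowerSeries in
/-- The generating function of the complete homogeneous symmetric sums. -/
theorem coeff_prod_geometric_eq_sum_sym {α R : Type*} [Fintype α] [DecidableEq α] [CommRing R]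
    (g : α → R) (k : ℕ) :
    coeff k (∏ x, (PowerSeries.mk fun n => g x ^ n : R⟦X⟧)) =
      ∑ m : Sym α k, ((m : Multiset α).map g).prod := by
  rw [coeff_prod]
  refine Finset.sum_bij' (fun l hl => (⟨Finsupp.toMultiset l, ?_⟩ : Sym α k))
    (fun m _ => Multiset.toFinsupp (m : Multiset α)) ?_ ?_ ?_ ?_ ?_
  · rw [Finset.mem_finsuppAntidiag'] at hl
    rw [Finsupp.card_toMultiset, ← hl.1]
    rfl
  · exact fun _ _ => Finset.mem_univ _
  · intro m _
    simp only [Finset.mem_finsuppAntidiag, Finset.subset_univ, and_true]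
    change ∑ x, (m : Multiset α).count x = k
    rw [Multiset.sum_count_eq_card (fun _ _ => Finset.mem_univ _)]
    exact m.2
  · intro l hl
    simp
  · intro m _
    apply Subtype.ext
    simp
  · intro l hl
    simp only [coeff_mk, Sym.coe_mk]
    rw [Finsupp.toMultiset_map, Finsupp.prod_toMultiset,
      Finsupp.prod_mapDomain_index (by simp) (by intros; exact pow_add _ _ _),
      Finsupp.prod_fintype _ _ (by simp)]

open PowerSeries in
theorem mk_pow_mul_one_sub_C_mul_X {R : Type*} [CommRing R] (r : R) :
    (PowerSeries.mk fun n => r ^ n : R⟦X⟧) * (1 - C r * X) = 1 := by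
  ext (_ | n)
  · simp
  · rw [mul_sub, mul_one, map_sub, mul_left_comm, coeff_C_mul, coeff_succ_mul_X]
    simp [pow_succ', coeff_one]

/-- A nontrivial character `ψ` of a finite group of prime exponent `p` takes each `p`-th root of
unity as a value equally often, so `∏ x, (1 - ψ x * y)` is a power of `1 - y ^ p`. -/
theorem AddChar.prod_one_sub_mul_eq_pow {G R : Type*} [AddCommGroup G] [Fintype G]
    [CommRing R] [IsDomain R] {p : ℕ} (hp : p.Prime) (hG : ∀ x : G, p • x = 0)
    (ψ : AddChar G R) (hψ : ψ ≠ 1) (y : R) :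
    ∏ x, (1 - ψ x * y) = (1 - y ^ p) ^ (Fintype.card G / p) := by
  classical
  obtain ⟨x₀, hx₀⟩ := AddChar.ne_one_iff.1 hψ
  have hpow (x : G) : ψ x ^ p = 1 := by
    rw [← AddChar.map_nsmul_eq_pow, hG, AddChar.map_zero_eq_one]
  have hprim : IsPrimitiveRoot (ψ x₀) p := by
    rw [← orderOf_eq_prime (hp := ⟨hp⟩) (hpow x₀) hx₀]
    exact IsPrimitiveRoot.orderOf _
  have hmaps : ∀ x ∈ (Finset.univ : Finset G), ψ x ∈ Polynomial.nthRootsFinset p (1 : R) :=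
    fun x _ => (Polynomial.mem_nthRootsFinset hp.pos _).2 (hpow x)
  have hfib : ∀ z ∈ Polynomial.nthRootsFinset p (1 : R),
      (Finset.univ.filter fun x => ψ x = z).card = (Finset.univ.filter fun x => ψ x = 1).card := by
    intro z hz
    have : NeZero p := ⟨hp.ne_zero⟩
    obtain ⟨i, -, rfl⟩ :=
      hprim.eq_pow_of_pow_eq_one ((Polynomial.mem_nthRootsFinset hp.pos _).1 hz)
    rw [← AddChar.map_nsmul_eq_pow]
    refine Finset.card_bij' (fun x _ => x - i • x₀) (fun x _ => x + i • x₀) ?_ ?_ ?_ ?_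
    · intro x hx
      simp only [Finset.mem_filter, Finset.mem_univ, true_and] at hx ⊢
      rw [sub_eq_add_neg, AddChar.map_add_eq_mul, hx, ← AddChar.map_add_eq_mul, add_neg_cancel,
        AddChar.map_zero_eq_one]
    · intro x hx
      simp only [Finset.mem_filter, Finset.mem_univ, true_and] at hx ⊢
      rw [AddChar.map_add_eq_mul, hx, one_mul]
    · simp
    · simp
  have hcard : Fintype.card G = p * (Finset.univ.filter fun x => ψ x = 1).card := by
    rw [← Finset.card_univ, Finset.card_eq_sum_card_fiberwise hmaps, Finset.sum_congr rfl hfib,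
      Finset.sum_const, hprim.card_nthRootsFinset, smul_eq_mul]
  rw [hcard, Nat.mul_div_cancel_left _ hp.pos, ← Finset.prod_fiberwise_of_maps_to hmaps]
  have key := hprim.pow_sub_pow_eq_prod_sub_mul 1 y hp.pos
  rw [one_pow] at key
  rw [key, ← Finset.prod_pow]
  refine Finset.prod_congr rfl fun z hz => ?_
  rw [← hfib z hz, Finset.prod_congr rfl (g := fun _ => 1 - z * y), Finset.prod_const]
  intro x hx
  rw [(Finset.mem_filter.1 hx).2]

/-- The sum of a character over the multisets of `k` nonzero elements. -/
noncomputable def AddChar.symSum {G R : Type*} [AddCommGroup G] [Fintype G] [DecidableEq G]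
    [CommRing R] (ψ : AddChar G R) (k : ℕ) : R :=
  ∑ m ∈ Finset.univ.filter (fun m : Sym G k => (0 : G) ∉ (m : Multiset G)),
    ψ (m : Multiset G).sum

theorem AddChar.map_multiset_sum_eq_prod {G R : Type*} [AddCommGroup G] [CommRing R]
    (ψ : AddChar G R) (m : Multiset G) : ψ m.sum = (m.map ψ).prod := by
  induction m using Multiset.induction with
  | empty => simp
  | cons a m ih => simp [AddChar.map_add_eq_mul, ih]

open PowerSeries in
theorem AddChar.mk_symSum_mul_prod {G R : Type*} [AddCommGroup G] [Fintype G] [DecidableEq G]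
    [CommRing R] (ψ : AddChar G R) :
    (PowerSeries.mk ψ.symSum : R⟦X⟧) * ∏ x, (1 - C (ψ x) * X) = 1 - X := by
  have hmk : (PowerSeries.mk ψ.symSum : R⟦X⟧) =
      ∏ x, (PowerSeries.mk fun n => (if x = 0 then 0 else ψ x) ^ n : R⟦X⟧) := by
    ext k
    rw [coeff_mk, coeff_prod_geometric_eq_sum_sym, AddChar.symSum, Finset.sum_filter]
    refine Finset.sum_congr rfl fun m _ => ?_
    split_ifs with h
    · symm
      apply Multiset.prod_eq_zero
      exact Multiset.mem_map.2 ⟨0, h, if_pos rfl⟩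
    · rw [AddChar.map_multiset_sum_eq_prod]
      congr 1
      refine Multiset.map_congr rfl fun x hx => ?_
      have hx0 : x ≠ 0 := fun h0 => h (h0 ▸ hx)
      rw [if_neg hx0]
  have hprod : ∏ x, (1 - C (ψ x) * X : R⟦X⟧) =
      (∏ x, (1 - C (if x = 0 then 0 else ψ x) * X)) * (1 - X) := by
    rw [← Finset.mul_prod_erase _ _ (Finset.mem_univ (0 : G)),
      ← Finset.mul_prod_erase _ (fun x => 1 - C (if x = 0 then 0 else ψ x) * X)
        (Finset.mem_univ (0 : G)), mul_comm]
    simp only [AddChar.map_zero_eq_one, if_true, map_zero, map_one, zero_mul, sub_zero, one_mul]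
    congr 1
    refine Finset.prod_congr rfl fun x hx => ?_
    rw [if_neg (Finset.ne_of_mem_erase hx)]
  rw [hmk, hprod, ← mul_assoc, ← Finset.prod_mul_distrib]
  simp only [mk_pow_mul_one_sub_C_mul_X, Finset.prod_const_one, one_mul]

open PowerSeries in
theorem AddChar.symSum_one {G R : Type*} [AddCommGroup G] [Fintype G] [DecidableEq G]
    [CommRing R] [IsDomain R] (hG : 2 ≤ Fintype.card G) (k : ℕ) :
    (1 : AddChar G R).symSum k = ((Fintype.card G + k - 2).choose k : R) := by
  obtain ⟨d, hd⟩ := Nat.exists_eq_add_of_le' hG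
  have h := AddChar.mk_symSum_mul_prod (1 : AddChar G R)
  simp only [AddChar.one_apply, map_one, one_mul, Finset.prod_const, Finset.card_univ, hd] at h
  have hX : (1 - X : R⟦X⟧) ≠ 0 := fun h0 => by
    simpa using congrArg (constantCoeff (R := R)) h0
  have hone : (PowerSeries.mk (1 : AddChar G R).symSum : R⟦X⟧) * (1 - X) ^ (d + 1) = 1 := by
    apply mul_right_cancel₀ hX
    rw [mul_assoc, ← pow_succ, h, one_mul]
  have heq := mul_right_cancel₀ (pow_ne_zero (d + 1) hX)
    (hone.trans (mk_add_choose_mul_one_sub_pow_eq_one R d).symm)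
  have hk := congrArg (coeff k) heq
  rw [coeff_mk, coeff_mk] at hk
  rw [hk, hd, show d + 2 + k - 2 = d + k by omega, Nat.choose_symm_add]

open PowerSeries in
theorem AddChar.symSum_of_ne_one {G R : Type*} [AddCommGroup G] [Fintype G] [DecidableEq G]
    [CommRing R] [IsDomain R] {p : ℕ} (hp : p.Prime) (hG : ∀ x : G, p • x = 0)
    (hpG : p ≤ Fintype.card G) {ψ : AddChar G R} (hψ : ψ ≠ 1) {k : ℕ} (hk : 0 < k)
    (hpk : p ∣ k) :
    ψ.symSum k = ((Fintype.card G / p + k / p - 1).choose (k / p) : R) := by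
  obtain ⟨d, hd⟩ := Nat.exists_eq_add_of_le' (Nat.div_pos hpG hp.pos)
  have hψC : (C : R →+* R⟦X⟧).toMonoidHom.compAddChar ψ ≠ 1 := by
    obtain ⟨x, hx⟩ := AddChar.ne_one_iff.1 hψ
    refine AddChar.ne_one_iff.2 ⟨x, fun h => hx (C_injective ?_)⟩
    simpa using h
  have h := AddChar.mk_symSum_mul_prod ψ
  have hprod := AddChar.prod_one_sub_mul_eq_pow hp hG _ hψC (X : R⟦X⟧)
  simp only [MonoidHom.compAddChar_apply, Function.comp_apply, RingHom.toMonoidHom_eq_coe,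
    MonoidHom.coe_coe] at hprod
  rw [hprod, hd] at h
  have hinv := congrArg (expand p hp.ne_zero) (mk_add_choose_mul_one_sub_pow_eq_one R d)
  simp only [map_mul, map_pow, map_sub, map_one, expand_X] at hinv
  have heq : (PowerSeries.mk ψ.symSum : R⟦X⟧) =
      expand p hp.ne_zero (PowerSeries.mk fun n => (Nat.choose (d + n) d : R)) * (1 - X) := by
    rw [← h, mul_left_comm, hinv, mul_one]
  obtain ⟨j, rfl⟩ := hpk
  obtain ⟨n, hn⟩ := Nat.exists_eq_succ_of_ne_zero hk.ne'
  have hnd : ¬ p ∣ n := fun hdvd => hp.one_lt.ne' <| Nat.dvd_one.1 <|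
    (Nat.dvd_add_right hdvd).1 ⟨j, hn.symm⟩
  have hc := congrArg (coeff (p * j)) heq
  rw [coeff_mk, mul_sub, mul_one, map_sub, coeff_expand_mul, coeff_mk, hn, Nat.succ_eq_add_one,
    coeff_succ_mul_X, coeff_expand_of_not_dvd _ _ _ hnd, sub_zero,
    ← Nat.succ_eq_add_one, ← hn] at hc
  rw [hc, hd, Nat.mul_div_cancel_left _ hp.pos, show d + 0 + 1 + j - 1 = d + j by omega,
    Nat.choose_symm_add]

/-- Fourier inversion for the number of multisets of nonzero elements with a given sum. -/
theorem card_mul_card_sym_sum_eq {G : Type*} [AddCommGroup G] [Fintype G] [DecidableEq G]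
    (b : G) (k : ℕ) :
    (Fintype.card G : ℂ) * ((Finset.univ.filter fun m : Sym G k =>
        (0 : G) ∉ (m : Multiset G) ∧ (m : Multiset G).sum = b).card : ℂ) =
      ∑ ψ : AddChar G ℂ, ψ (-b) * ψ.symSum k := by
  simp only [AddChar.symSum, Finset.mul_sum, ← AddChar.map_add_eq_mul]
  rw [Finset.sum_comm]
  simp only [AddChar.sum_apply_eq_ite, neg_add_eq_zero]
  rw [← Finset.sum_filter, Finset.filter_filter, Finset.sum_const, nsmul_eq_mul, mul_comm]
  simp only [eq_comm]

/-- **Partitions over finite fields, case `k ≡ 0 (mod p)`.**  For `q = p^a`, `b ∈ F_q`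
and `p ∣ k`, `q·P_k(b) = C(q+k−2, k) + v(b)·C(q/p + k/p − 1, k/p)`, where `P_k(b)` is the
number of multisets of `k` nonzero elements of `F_q` with sum `b`, and `v(b) = q−1` if
`b = 0`, `v(b) = −1` otherwise. -/
theorem partitions_finite_field_zero_mod_p (p a : ℕ) (hp : p.Prime) (ha : 0 < a)
    (F : Type*) [Field F] [Fintype F] [DecidableEq F] (hF : Fintype.card F = p ^ a)
    (b : F) (k : ℕ) (hk : 0 < k) (hpk : p ∣ k) :
    (p ^ a : ℤ) * ((Finset.univ.filter fun m : Sym F k =>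
        (0 : F) ∉ (m : Multiset F) ∧ (m : Multiset F).sum = b).card : ℤ) =
      ((p ^ a + k - 2).choose k : ℤ) +
        (if b = 0 then (p ^ a : ℤ) - 1 else -1) *
          ((p ^ a / p + k / p - 1).choose (k / p) : ℤ) := by
  have hq2 : 2 ≤ Fintype.card F := Fintype.one_lt_card
  have hple : p ≤ Fintype.card F := hF ▸ Nat.le_self_pow ha.ne' p
  have hchar : ∀ x : F, p • x = 0 := by
    have hcast : (p : F) = 0 := by
      have h := FiniteField.cast_card_eq_zero F
      rw [hF, Nat.cast_pow] at h
      exact pow_eq_zero_iff ha.ne' |>.1 h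
    intro x
    rw [nsmul_eq_mul, hcast, zero_mul]
  have hinv := card_mul_card_sym_sum_eq b k
  rw [← Finset.add_sum_erase _ _ (Finset.mem_univ (1 : AddChar F ℂ)), AddChar.symSum_one hq2,
    Finset.sum_congr rfl (fun ψ hψ => by
      rw [AddChar.symSum_of_ne_one hp hchar hple (Finset.ne_of_mem_erase hψ) hk hpk]),
    ← Finset.sum_mul, Finset.sum_erase_eq_sub (Finset.mem_univ _), AddChar.sum_apply_eq_ite,
    AddChar.one_apply, one_mul, hF] at hinv
  have hcomplex : ((p ^ a : ℤ) * ((Finset.univ.filter fun m : Sym F k =>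
      (0 : F) ∉ (m : Multiset F) ∧ (m : Multiset F).sum = b).card : ℤ) : ℂ) =
      (((p ^ a + k - 2).choose k : ℤ) + (if b = 0 then (p ^ a : ℤ) - 1 else -1) *
        ((p ^ a / p + k / p - 1).choose (k / p) : ℤ) : ℤ) := by
    push_cast at hinv ⊢
    rw [hinv]
    by_cases hb : b = 0 <;> simp [hb]
  exact_mod_cast hcomplex
end

section
/- Let p be a prime, q = p^a a prime power, F_q the finite field with q elements, b ∈ F_q, and k a positive integer with k ≡ 1 (mod p). Then q·P_k(b) = binom(q+k−2, k) − v(b)·binom(q/p + (k−1)/p − 1, (k−1)/p). -/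
open PowerSeries

/-- The complete homogeneous sums of `w` over `s` are the coefficients of `∏ 1 / (1 - w x X)`. -/
theorem coeff_prod_mk_pow_eq_sum_sym {α R : Type*} [DecidableEq α] [CommRing R]
    (s : Finset α) (w : α → R) (k : ℕ) :
    coeff k (∏ x ∈ s, (PowerSeries.mk fun n => w x ^ n)) =
      ∑ m ∈ s.sym k, ((m : Multiset α).map w).prod := by
  rw [PowerSeries.coeff_prod]
  symm
  refine Finset.sum_bij (fun m _ => Multiset.toFinsupp (m : Multiset α)) ?_ ?_ ?_ ?_
  · intro m hm
    have hs : (m : Multiset α).toFinset ⊆ s := fun x hx =>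
      Finset.mem_sym_iff.1 hm x (by simpa using hx)
    rw [Finset.mem_finsuppAntidiag]
    refine ⟨?_, by simpa using hs⟩
    change ∑ x ∈ s, (m : Multiset α).count x = k
    rw [Multiset.sum_count_eq_card (fun x hx => hs (by simpa using hx))]
    exact m.2
  · intro m _ m' _ h
    exact Sym.coe_injective (Multiset.toFinsupp.injective h)
  · intro l hl
    rw [Finset.mem_finsuppAntidiag'] at hl
    refine ⟨⟨Finsupp.toMultiset l, ?_⟩, ?_, ?_⟩
    · rw [Finsupp.card_toMultiset]; exact hl.1
    · refine Finset.mem_sym_iff.2 fun x hx => hl.2 ?_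
      have hx' : x ∈ Finsupp.toMultiset l := hx
      exact (Finsupp.mem_toMultiset l x).1 hx'
    · simp
  · intro m hm
    have hs : (m : Multiset α).toFinset ⊆ s := fun x hx =>
      Finset.mem_sym_iff.1 hm x (by simpa using hx)
    simp only [coeff_mk, Multiset.toFinsupp_apply]
    exact Finset.prod_multiset_map_count _ _ |>.trans
      (Finset.prod_subset hs fun x _ hx => by
        rw [Multiset.count_eq_zero_of_notMem (by simpa using hx), pow_zero])

theorem mk_pow_mul_one_sub {R : Type*} [CommRing R] (r : R) :
    (PowerSeries.mk fun n => r ^ n) * (1 - C r * X) = 1 := by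
  have h := congrArg (rescale r) (mk_one_mul_one_sub_eq_one R)
  simpa [rescale_mk] using h

/-- A nontrivial additive character on a group of exponent `p` takes each `p`-th root of unity
as a value equally often, so the product over its values is a power of `u ^ p - v ^ p`. -/
theorem AddChar.prod_sub_mul_eq {A R : Type*} [AddCommGroup A] [Fintype A] [CommRing R] [IsDomain R]
    {p : ℕ} (hp : p.Prime) (hA : ∀ x : A, p • x = 0) (ψ : AddChar A R) (hψ : ψ ≠ 1) (u v : R) :
    ∏ x, (u - ψ x * v) = (u ^ p - v ^ p) ^ (Fintype.card A / p) := by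
  classical
  have hpow (x : A) : ψ x ^ p = 1 := by rw [← AddChar.map_nsmul_eq_pow, hA, AddChar.map_zero_eq_one]
  obtain ⟨y, hy⟩ := AddChar.ne_one_iff.1 hψ
  have : NeZero p := ⟨hp.ne_zero⟩
  have : Fact p.Prime := ⟨hp⟩
  have hζ : IsPrimitiveRoot (ψ y) p :=
    IsPrimitiveRoot.iff_orderOf.2 (orderOf_eq_prime (hpow y) hy)
  have hmaps : ∀ x ∈ (Finset.univ : Finset A), ψ x ∈ Polynomial.nthRootsFinset p (1 : R) :=
    fun x _ => (Polynomial.mem_nthRootsFinset hp.pos _).2 (hpow x)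
  have hfib : ∀ ζ ∈ Polynomial.nthRootsFinset p (1 : R),
      (Finset.univ.filter fun x => ψ x = ζ).card = (Finset.univ.filter fun x => ψ x = 1).card := by
    intro ζ hmem
    obtain ⟨i, -, rfl⟩ := hζ.eq_pow_of_pow_eq_one ((Polynomial.mem_nthRootsFinset hp.pos _).1 hmem)
    symm
    refine Finset.card_equiv (Equiv.addLeft (i • y)) fun x => ?_
    have hu : ψ y ^ i ≠ 0 := pow_ne_zero _ (hζ.ne_zero hp.ne_zero)
    simp [AddChar.map_add_eq_mul, AddChar.map_nsmul_eq_pow, hu]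
  have hcard : Fintype.card A = p * (Finset.univ.filter fun x => ψ x = 1).card := by
    rw [← Finset.card_univ, Finset.card_eq_sum_card_fiberwise hmaps, Finset.sum_congr rfl hfib,
      Finset.sum_const, hζ.card_nthRootsFinset, smul_eq_mul]
  rw [hcard, Nat.mul_div_cancel_left _ hp.pos, hζ.pow_sub_pow_eq_prod_sub_mul u v hp.pos,
    ← Finset.prod_pow, ← Finset.prod_fiberwise_of_maps_to hmaps]
  refine Finset.prod_congr rfl fun ζ hmem => ?_
  rw [Finset.prod_congr rfl (g := fun _ => u - ζ * v), Finset.prod_const, hfib ζ hmem]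
  intro x hx
  rw [(Finset.mem_filter.1 hx).2]

theorem AddChar.map_multiset_sum {A R : Type*} [AddCommMonoid A] [CommMonoid R] (ψ : AddChar A R)
    (m : Multiset A) : ψ m.sum = (m.map ψ).prod := by
  induction m using Multiset.induction with
  | empty => simp
  | cons a m ih => simp [AddChar.map_add_eq_mul, ih]

/-- The number of multisets of size `k` with elements in `s`. -/
theorem card_finset_sym {α : Type*} [DecidableEq α] (s : Finset α) (k : ℕ) :
    (s.sym k).card = (s.card + k - 1).choose k := by
  have h := coeff_prod_mk_pow_eq_sum_sym (R := ℤ) s (fun _ => 1) k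
  rw [PowerSeries.coeff_prod] at h
  simp only [Multiset.map_const', Multiset.prod_replicate, one_pow, Finset.sum_const, coeff_mk,
    Finset.prod_const_one, nsmul_eq_mul, mul_one, Nat.cast_inj] at h
  rw [← h, Finset.card_finsuppAntidiag_nat_eq_choose]

/-- The character sum over multisets of `p * j + 1` nonzero elements. -/
theorem AddChar.sum_sym_erase_zero {A R : Type*} [AddCommGroup A] [Fintype A] [DecidableEq A]
    [CommRing R] [IsDomain R] {p : ℕ} (hp : p.Prime) (hA : ∀ x : A, p • x = 0)
    (hcard : p ≤ Fintype.card A) (ψ : AddChar A R) (hψ : ψ ≠ 1) (j : ℕ) :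
    ∑ m ∈ (Finset.univ.erase (0 : A)).sym (p * j + 1), ψ (m : Multiset A).sum =
      -((Fintype.card A / p + j - 1).choose j : R) := by
  set d := Fintype.card A / p with hd
  have hd0 : 0 < d := Nat.div_pos hcard hp.pos
  set E : R⟦X⟧ := ∏ x ∈ Finset.univ.erase (0 : A), PowerSeries.mk fun n => ψ x ^ n with hE
  have hEinv : E * ∏ x ∈ Finset.univ.erase (0 : A), (1 - C (ψ x) * X) = 1 := by
    rw [hE, ← Finset.prod_mul_distrib]
    exact Finset.prod_eq_one fun x _ => mk_pow_mul_one_sub _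
  let Ψ : AddChar A R⟦X⟧ := (C : R →+* R⟦X⟧).toMonoidHom.compAddChar ψ
  have hΨ : Ψ ≠ 1 := by
    obtain ⟨y, hy⟩ := AddChar.ne_one_iff.1 hψ
    exact AddChar.ne_one_iff.2 ⟨y, fun h => hy (C_injective (h.trans (map_one C).symm))⟩
  have hall : (∏ x ∈ Finset.univ.erase (0 : A), (1 - C (ψ x) * X)) * (1 - X) =
      (1 - X ^ p : R⟦X⟧) ^ d := by
    have h := AddChar.prod_sub_mul_eq hp hA Ψ hΨ 1 X
    rw [one_pow, ← Finset.prod_erase_mul _ _ (Finset.mem_univ 0), AddChar.map_zero_eq_one,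
      one_mul] at h
    exact h
  have hexp : (1 - X ^ p : R⟦X⟧) ^ d *
      expand p hp.ne_zero (invOneSubPow R d : R⟦X⟧) = 1 := by
    have h := congrArg (expand p hp.ne_zero) (invOneSubPow R d).inv_mul
    rw [← Units.inv_eq_val_inv, invOneSubPow_inv_eq_one_sub_pow] at h
    simpa using h
  have hEeq : E = (1 - X) * expand p hp.ne_zero (invOneSubPow R d : R⟦X⟧) := by
    linear_combination (-E) * hexp - E * expand p hp.ne_zero (invOneSubPow R d : R⟦X⟧) * hall +
      (1 - X) * expand p hp.ne_zero (invOneSubPow R d : R⟦X⟧) * hEinv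
  have hndvd : ¬ p ∣ p * j + 1 := fun h =>
    hp.one_lt.ne' (Nat.dvd_one.1 ((Nat.dvd_add_right (dvd_mul_right p j)).1 h))
  simp_rw [AddChar.map_multiset_sum]
  rw [← coeff_prod_mk_pow_eq_sum_sym, ← hE, hEeq, sub_mul, one_mul, map_sub, coeff_succ_X_mul,
    coeff_expand_of_not_dvd _ _ _ hndvd, coeff_expand_mul,
    invOneSubPow_val_eq_mk_sub_one_add_choose_of_pos _ _ hd0, coeff_mk, zero_sub,
    Nat.choose_symm_add, show d - 1 + j = d + j - 1 by omega]

/-- **Partitions over finite fields, case `k ≡ 1 (mod p)`.**  For `q = p^a`, `b ∈ F_q`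
and `k ≡ 1 (mod p)`, `q·P_k(b) = C(q+k−2, k) − v(b)·C(q/p + (k−1)/p − 1, (k−1)/p)`,
where `P_k(b)` is the number of multisets of `k` nonzero elements of `F_q` with sum `b`,
and `v(b) = q−1` if `b = 0`, `v(b) = −1` otherwise. -/
theorem partitions_finite_field_one_mod_p (p a : ℕ) (hp : p.Prime) (ha : 0 < a)
    (F : Type*) [Field F] [Fintype F] [DecidableEq F] (hF : Fintype.card F = p ^ a)
    (b : F) (k : ℕ) (hk : 0 < k) (hk1 : k ≡ 1 [MOD p]) :
    (p ^ a : ℤ) * ((Finset.univ.filter fun m : Sym F k =>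
        (0 : F) ∉ (m : Multiset F) ∧ (m : Multiset F).sum = b).card : ℤ) =
      ((p ^ a + k - 2).choose k : ℤ) -
        (if b = 0 then (p ^ a : ℤ) - 1 else -1) *
          ((p ^ a / p + (k - 1) / p - 1).choose ((k - 1) / p) : ℤ) := by
  have hq2 : 2 ≤ p ^ a := hp.two_le.trans (Nat.le_self_pow ha.ne' p)
  obtain ⟨j, rfl⟩ : ∃ j, k = p * j + 1 := by
    obtain ⟨j, hj⟩ := (Nat.modEq_iff_dvd' hk).1 hk1.symm
    exact ⟨j, by omega⟩
  have hp0 : (p : F) = 0 := by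
    refine eq_zero_of_pow_eq_zero (n := a) ?_
    rw [← Nat.cast_pow, ← hF, Nat.cast_card_eq_zero]
  have hexp (x : F) : p • x = 0 := by rw [nsmul_eq_mul, hp0, zero_mul]
  set S := (Finset.univ.erase (0 : F)).sym (p * j + 1) with hS
  set ψ := AddChar.FiniteField.primitiveChar_to_Complex F
  have hψ : ψ.IsPrimitive := AddChar.FiniteField.primitiveChar_to_Complex_isPrimitive F
  have hfilter : (Finset.univ.filter fun m : Sym F (p * j + 1) =>
      (0 : F) ∉ (m : Multiset F) ∧ (m : Multiset F).sum = b) =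
      S.filter fun m : Sym F (p * j + 1) => (m : Multiset F).sum = b := by
    ext m
    simp only [hS, Finset.mem_filter, Finset.mem_univ, true_and, Finset.mem_sym_iff,
      Finset.mem_erase, and_true]
    refine and_congr_left fun _ => ⟨fun h x hx hx0 => h (hx0 ▸ hx), fun h h0 => h 0 h0 rfl⟩
  set B := (p ^ a / p + j - 1).choose j with hB
  have hinner (c : F) (hc : c ≠ 0) :
      ∑ m ∈ S, ψ (c * (m : Multiset F).sum) = -(B : ℂ) := by
    have h := AddChar.sum_sym_erase_zero hp hexp (hF ▸ Nat.le_self_pow ha.ne' p)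
      (ψ.mulShift c) (hψ hc) j
    rw [hF] at h
    simpa only [AddChar.mulShift_apply] using h
  have hS_card : S.card = (p ^ a + (p * j + 1) - 2).choose (p * j + 1) := by
    rw [hS, card_finset_sym, Finset.card_erase_of_mem (Finset.mem_univ _), Finset.card_univ, hF]
    congr 1
    omega
  have hdual : ∑ c ∈ Finset.univ.erase (0 : F), ψ (c * -b) =
      if b = 0 then (p ^ a : ℂ) - 1 else -1 := by
    have h := AddChar.sum_mulShift (-b) hψ
    rw [← Finset.sum_erase_add _ _ (Finset.mem_univ 0), zero_mul, AddChar.map_zero_eq_one,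
      hF] at h
    rw [eq_sub_of_add_eq h]
    split_ifs <;> simp_all
  have hmain : (p ^ a : ℂ) * ((S.filter fun m : Sym F (p * j + 1) => (m : Multiset F).sum = b).card : ℂ) =
      (S.card : ℂ) - (if b = 0 then (p ^ a : ℂ) - 1 else -1) * B := by
    calc (p ^ a : ℂ) * ((S.filter fun m : Sym F (p * j + 1) => (m : Multiset F).sum = b).card : ℂ)
        = ∑ m ∈ S, ∑ c, ψ (c * ((m : Multiset F).sum - b)) := by
          simp_rw [AddChar.sum_mulShift _ hψ, sub_eq_zero, hF]
          rw [← Nat.cast_sum, ← Finset.sum_filter, Finset.sum_const, smul_eq_mul, mul_comm]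
          push_cast
          rfl
      _ = ∑ c, ψ (c * -b) * ∑ m ∈ S, ψ (c * (m : Multiset F).sum) := by
          rw [Finset.sum_comm]
          refine Finset.sum_congr rfl fun c _ => ?_
          rw [Finset.mul_sum]
          refine Finset.sum_congr rfl fun m _ => ?_
          rw [← AddChar.map_add_eq_mul]
          congr 1
          ring
      _ = (∑ c ∈ Finset.univ.erase (0 : F), ψ (c * -b)) * -(B : ℂ) + S.card := by
          rw [← Finset.sum_erase_add _ _ (Finset.mem_univ 0), Finset.sum_mul]
          congr 1
          · exact Finset.sum_congr rfl fun c hc => by rw [hinner c (Finset.ne_of_mem_erase hc)]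
          · simp
      _ = _ := by rw [hdual]; ring
  rw [hfilter, Nat.add_sub_cancel, Nat.mul_div_cancel_left _ hp.pos, ← hB, ← hS_card]
  exact_mod_cast hmain
end
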